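/- arXiv:2207.11852 — 7 statements merged into one kernel-verified Lean document; each statement's English description precedes it below -/
import Mathlib

section
/- Let (G,X) be a flow where G is compactly generated by Γ and X is 0-dimensional. Then the following nine conditions are pairwise equivalent: (1) every point of X is Γ-recurrent of type I; (2) every point of X is Γ-recurrent of type II; (3) every point of X is almost periodic; (4) X is a union of G-minimal sets; (5) the orbit closure relation R_o(X) is closed in X × X; (6) the orbit closure mapping x ↦ closure(G•x) is ⌜continuous⌝; (7) the orbit closure mapping x ↦ closure(G•x) is upper semicontinuous; (8) for every compact open subset U of X the set U_G^* = {x ∈ X | closure(G•x) ⊆ U} is compact and open; (9) (G,X) is locally weakly almost periodic with G discrete. -/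
open Pointwise Filter Topology Uniformity

/-- A directed (preordered, nonempty) index relation for nets. -/
def DirIdx {ι : Type} (le : ι → ι → Prop) : Prop :=
  Nonempty ι ∧ (∀ i, le i i) ∧ (∀ i j k, le i j → le j k → le i k) ∧
    ∀ i j, ∃ k, le i k ∧ le j k

/-- The limsup of a net of subsets of a topological space: the set of points every
neighborhood of which meets the sets frequently along the net. -/
def NetLimsup {ι α : Type} [TopologicalSpace α] (le : ι → ι → Prop) (Y : ι → Set α) :
    Set α :=
  {y | ∀ U ∈ 𝓝 y, ∀ i, ∃ j, le i j ∧ (U ∩ Y j).Nonempty}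

/-- The Γ-length of a group element: the least `r ≥ 1` with `g ∈ Γ ^ r`. -/
noncomputable def len {G : Type} [Group G] (Γ : Set G) (g : G) : ℕ :=
  sInf {r : ℕ | 1 ≤ r ∧ g ∈ Γ ^ r}

/-- `K(g) = Γ^{|g|-1} · g`. -/
def Kset {G : Type} [Group G] (Γ : Set G) (g : G) : Set G :=
  Γ ^ (len Γ g - 1) * {g}

/-- A Γ-cone: the limsup of `K(g_i)` along a net `(g_i)` whose Γ-lengths are
nondecreasing and tend to infinity. -/
def IsCone {G : Type} [Group G] [TopologicalSpace G] (Γ : Set G) (C : Set G) : Prop :=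
  ∃ (ι : Type) (le : ι → ι → Prop) (g : ι → G),
    DirIdx le ∧
    (∀ i j, le i j → len Γ (g i) ≤ len Γ (g j)) ∧
    (∀ n : ℕ, ∃ i, ∀ j, le i j → n ≤ len Γ (g j)) ∧
    C = NetLimsup le fun i => Kset Γ (g i)

/-- Γ-recurrence of type I: every Γ-cone sends `x` back to every neighborhood of `x`. -/
def RecurrentI {G X : Type} [Group G] [TopologicalSpace G] [TopologicalSpace X]
    [MulAction G X] (Γ : Set G) (x : X) : Prop :=
  ∀ C : Set G, IsCone Γ C → ∀ U ∈ 𝓝 x, ∃ c ∈ C, c • x ∈ U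

/-- Γ-recurrence of type II. -/
def RecurrentII {G X : Type} [Group G] [TopologicalSpace X] [MulAction G X]
    (Γ : Set G) (x : X) : Prop :=
  ∀ U ∈ 𝓝 x, ∀ (ι : Type) (le : ι → ι → Prop) (g : ι → G),
    DirIdx le →
    (∀ n : ℕ, ∃ i, ∀ j, le i j → n ≤ len Γ (g j)) →
    ∃ n : ℕ, 1 ≤ n ∧ ∀ i, ∃ j, le i j ∧ ∃ c ∈ Kset Γ (g j), c • x ∈ U ∧ len Γ c ≤ n

/-- Almost periodicity: every return-time set `N(x,U)` is syndetic. -/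
def AlmostPeriodicPt (G : Type) {X : Type} [Group G] [TopologicalSpace G]
    [TopologicalSpace X] [MulAction G X] (x : X) : Prop :=
  ∀ U ∈ 𝓝 x, ∃ K : Set G, IsCompact K ∧ K⁻¹ * {g : G | g • x ∈ U} = Set.univ

/-- A minimal set: the orbit closure of each of its points equals it. -/
def IsMinimalSet (G : Type) {X : Type} [Group G] [TopologicalSpace X] [MulAction G X]
    (M : Set X) : Prop :=
  ∀ x ∈ M, closure (MulAction.orbit G x) = M

/-!
The pivot is symmetry of the orbit closure relation, which says that orbit closures are minimal.

If `x` lies in the orbit closure of each of its limit points, compactness gives finitely many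
`f ∈ Γ ^ N` moving every point of `closure (G • x)` into a given neighbourhood `U` of `x`.
As soon as `|g| > N`, the set `K(g)` contains a translate `Γ ^ N * h` with `h ∈ Γ ^ (N + 1)`, so it
contains a return time of `x` to `U` of length at most `2 * N + 1`. This is recurrence of type II.
It implies type I because the bounded return times lie in a compact set and so accumulate at points
of the cone.

Conversely, let `U` be compact and open. If `U_G^*` is not open, then some points near `U_G^*` leave
`U`, but only after a long time. If `g` is a shortest element moving `z ∈ U` out of `U`, then
`Γ ^ (|g| - 1)` keeps `z` in `U`, that is, `K(g⁻¹)` moves the exit point `g • z` into `U`. The exit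
points lie in the compact set `Γ • U \ U`, and a limit point of them contradicts recurrence.
Since compact open sets form neighbourhood bases of compact sets, openness of all the `U_G^*` is
upper semicontinuity of the orbit closure mapping.
-/

open TopologicalSpace MulAction

section Nets

variable {ι : Type} {le : ι → ι → Prop}

/-- The filter of tails of a net indexed by `(ι, le)`; convergence along the net is `Tendsto` from
this filter. -/
def tailFilter (le : ι → ι → Prop) : Filter ι := ⨅ i, 𝓟 {j | le i j}

theorem hasBasis_tailFilter (hd : DirIdx le) :
    (tailFilter le).HasBasis (fun _ => True) fun i => {j | le i j} := by
  obtain ⟨hne, -, htrans, hdir⟩ := hd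
  refine hasBasis_iInf_principal fun i j => ?_
  obtain ⟨k, hik, hjk⟩ := hdir i j
  exact ⟨k, fun l hl => htrans _ _ _ hik hl, fun l hl => htrans _ _ _ hjk hl⟩

theorem eventually_tailFilter (hd : DirIdx le) {p : ι → Prop} :
    (∀ᶠ j in tailFilter le, p j) ↔ ∃ i, ∀ j, le i j → p j := by
  simpa using (hasBasis_tailFilter hd).eventually_iff (q := p)

theorem frequently_tailFilter (hd : DirIdx le) {p : ι → Prop} :
    (∃ᶠ j in tailFilter le, p j) ↔ ∀ i, ∃ j, le i j ∧ p j := by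
  simpa using (hasBasis_tailFilter hd).frequently_iff (q := p)

theorem tendsto_tailFilter_nhds {α : Type*} [TopologicalSpace α] (hd : DirIdx le) {a : ι → α}
    {x : α} : Tendsto a (tailFilter le) (𝓝 x) ↔ ∀ U ∈ 𝓝 x, ∃ i, ∀ j, le i j → a j ∈ U :=
  forall₂_congr fun _ _ => eventually_tailFilter hd

theorem neBot_tailFilter (hd : DirIdx le) : (tailFilter le).NeBot :=
  (hasBasis_tailFilter hd).neBot_iff.2 fun {i} _ => ⟨i, hd.2.1 i⟩

theorem mem_netLimsup_iff {α : Type} [TopologicalSpace α] (hd : DirIdx le) {Y : ι → Set α}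
    {y : α} : y ∈ NetLimsup le Y ↔ ∀ U ∈ 𝓝 y, ∃ᶠ j in tailFilter le, (U ∩ Y j).Nonempty := by
  simp only [frequently_tailFilter hd]
  rfl

theorem exists_mem_netLimsup_of_frequently {α : Type} [TopologicalSpace α] (hd : DirIdx le)
    {Y : ι → Set α} {D : Set α} (hD : IsCompact D)
    (hfreq : ∃ᶠ j in tailFilter le, (D ∩ Y j).Nonempty) : ∃ y ∈ D, y ∈ NetLimsup le Y := by
  by_contra! hdisj
  have hlocal : ∀ y ∈ D, {p : ι × α | p.2 ∉ Y p.1} ∈ tailFilter le ×ˢ 𝓝 y := by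
    intro y hy
    have hy' := hdisj y hy
    rw [mem_netLimsup_iff hd] at hy'
    push Not at hy'
    obtain ⟨O, hO, hev⟩ := hy'
    filter_upwards [prod_mem_prod hev hO] with p hp hpY
    exact hp.1.subset ⟨hp.2, hpY⟩
  have hprod : ∀ᶠ p in tailFilter le ×ˢ 𝓝ˢ D, p.2 ∉ Y p.1 := hD.mem_prod_nhdsSet_of_forall hlocal
  refine hfreq (hprod.curry.mono fun j hj => ?_)
  rintro ⟨y, hyD, hyY⟩
  exact hj.self_of_nhdsSet y hyD hyY

theorem exists_net_monotone_tendsto {α : Type} {β : Type*} [Preorder β] (F : Filter α) [F.NeBot]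
    (ℓ : α → β) (hℓ : ∀ a, ∀ᶠ b in F, ℓ a ≤ ℓ b) :
    ∃ (κ : Type) (le : κ → κ → Prop) (a : κ → α), DirIdx le ∧
      (∀ i j, le i j → ℓ (a i) ≤ ℓ (a j)) ∧ Tendsto a (tailFilter le) F := by
  let κ : Type := {p : Set α × α // p.1 ∈ F ∧ p.2 ∈ p.1}
  let le : κ → κ → Prop := fun p q => q.1.1 ⊆ p.1.1 ∧ ℓ p.1.2 ≤ ℓ q.1.2
  have hpick : ∀ s ∈ F, ∃ p : κ, p.1.1 = s := fun s hs =>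
    let ⟨a, ha⟩ := nonempty_of_mem hs
    ⟨⟨(s, a), hs, ha⟩, rfl⟩
  have hd : DirIdx le := by
    refine ⟨(hpick _ univ_mem).nonempty, fun p => ⟨subset_rfl, le_rfl⟩,
      fun p q r hpq hqr => ⟨hqr.1.trans hpq.1, hpq.2.trans hqr.2⟩, fun p q => ?_⟩
    have hs : p.1.1 ∩ q.1.1 ∈ F := inter_mem p.2.1 q.2.1
    obtain ⟨a, ⟨has, hpa⟩, hqa⟩ := ((eventually_mem_set.2 hs).and (hℓ p.1.2)).and (hℓ q.1.2)
      |>.exists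
    exact ⟨⟨(_, a), hs, has⟩, ⟨Set.inter_subset_left, hpa⟩, ⟨Set.inter_subset_right, hqa⟩⟩
  refine ⟨κ, le, fun p => p.1.2, hd, fun p q hpq => hpq.2, fun s hs => ?_⟩
  obtain ⟨p, rfl⟩ := hpick s hs
  exact (eventually_tailFilter hd).2 ⟨p, fun q hpq => hpq.1 q.2.2⟩

end Nets

section Hemicontinuity

variable {ι X Y : Type} [TopologicalSpace X] [TopologicalSpace Y] {le : ι → ι → Prop}
  {f : X → Set Y} {xs : ι → X} {x : X}

theorem upperHemicontinuous_iff_exists_mem_nhds : UpperHemicontinuous f ↔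
    ∀ (x : X) (U : Set Y), IsOpen U → f x ⊆ U → ∃ V ∈ 𝓝 x, ∀ x' ∈ V, f x' ⊆ U :=
  upperHemicontinuous_iff_forall_isOpen.trans <|
    forall₄_congr fun _ _ _ _ => eventually_iff_exists_mem

theorem isClosed_graph_of_upperHemicontinuous [RegularSpace Y] (hf : UpperHemicontinuous f)
    (hclosed : ∀ x, IsClosed (f x)) : IsClosed {p : X × Y | p.2 ∈ f p.1} :=
  isClosed_iff_frequently.2 fun p hp => (hf.upperHemicontinuousAt p.1).mem_of_tendsto (hclosed p.1)
    continuous_fst.continuousAt hp continuous_snd.continuousAt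

/-- The paper's continuity of a set-valued map `f`: along every convergent net, the limsup of the
values of `f` is the value of `f` at the limit. -/
def NetContinuous (f : X → Set Y) : Prop :=
  ∀ (ι : Type) (le : ι → ι → Prop) (xs : ι → X) (x : X), DirIdx le →
    Tendsto xs (tailFilter le) (𝓝 x) → NetLimsup le (fun i => f (xs i)) = f x

theorem netContinuous_iff : NetContinuous f ↔
    ∀ (ι : Type) (le : ι → ι → Prop) (xs : ι → X) (x : X), DirIdx le →
      (∀ U ∈ 𝓝 x, ∃ i, ∀ j, le i j → xs j ∈ U) → NetLimsup le (fun i => f (xs i)) = f x :=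
  forall₅_congr fun _ _ _ _ hd => imp_congr (tendsto_tailFilter_nhds hd) Iff.rfl

theorem netLimsup_subset_of_isClosed_graph (hf : IsClosed {p : X × Y | p.2 ∈ f p.1})
    (hd : DirIdx le) (hx : Tendsto xs (tailFilter le) (𝓝 x)) :
    NetLimsup le (fun i => f (xs i)) ⊆ f x := by
  intro y hy
  by_contra hyx
  obtain ⟨V, hV, W, hW, hVW⟩ := mem_nhds_prod_iff.1 (hf.isOpen_compl.mem_nhds (x := (x, y)) hyx)
  obtain ⟨j, ⟨z, hzW, hz⟩, hjV⟩ :=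
    (((mem_netLimsup_iff hd).1 hy W hW).and_eventually (hx hV)).exists
  exact hVW (Set.mk_mem_prod hjV hzW) hz

theorem subset_netLimsup_of_lowerHemicontinuous (hf : LowerHemicontinuous f) (hd : DirIdx le)
    (hx : Tendsto xs (tailFilter le) (𝓝 x)) : f x ⊆ NetLimsup le fun i => f (xs i) := by
  refine fun y hy => (mem_netLimsup_iff hd).2 fun U hU => ?_
  obtain ⟨V, hVU, hV, hyV⟩ := mem_nhds_iff.1 hU
  have hev : ∀ᶠ j in tailFilter le, (f (xs j) ∩ V).Nonempty :=
    hx ((lowerHemicontinuous_iff_isOpen_inter_nonempty.1 hf V hV).mem_nhds ⟨y, hy, hyV⟩)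
  have := neBot_tailFilter hd
  exact (hev.mono fun j ⟨z, hz, hzV⟩ => ⟨z, hVU hzV, hz⟩).frequently

theorem netContinuous_of_isClosed_graph (hf : LowerHemicontinuous f)
    (hgraph : IsClosed {p : X × Y | p.2 ∈ f p.1}) : NetContinuous f :=
  fun _ _ _ _ hd hx => (netLimsup_subset_of_isClosed_graph hgraph hd hx).antisymm
    (subset_netLimsup_of_lowerHemicontinuous hf hd hx)

end Hemicontinuity

theorem isClopen_of_isCompact_of_isOpen {X : Type*} [TopologicalSpace X] [R1Space X] {U : Set X}
    (hc : IsCompact U) (ho : IsOpen U) : IsClopen U :=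
  ⟨closure_subset_iff_isClosed.1 (hc.closure_subset_of_isOpen ho subset_rfl), ho⟩

theorem prespectralSpace_of_isTopologicalBasis_isClopen {X : Type*} [TopologicalSpace X]
    [WeaklyLocallyCompactSpace X] (hbasis : IsTopologicalBasis {V : Set X | IsClopen V}) :
    PrespectralSpace X where
  isTopologicalBasis := by
    refine isTopologicalBasis_of_isOpen_of_nhds (fun V hV => hV.1) fun x U hxU hU => ?_
    obtain ⟨L, hL, hxL⟩ := exists_compact_mem_nhds x
    obtain ⟨V, hV, hxV, hVLU⟩ :=
      hbasis.mem_nhds_iff.1 (inter_mem hxL (hU.mem_nhds hxU))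
    exact ⟨V, ⟨hV.isOpen, hL.of_isClosed_subset hV.isClosed fun _ hz => (hVLU hz).1⟩, hxV,
      fun _ hz => (hVLU hz).2⟩

section WordLength

variable {G : Type} [Group G] {Γ : Set G} {g : G} {n : ℕ}

theorem mem_pow_len (hgen : ∀ g : G, ∃ r : ℕ, 1 ≤ r ∧ g ∈ Γ ^ r) (g : G) : g ∈ Γ ^ len Γ g :=
  (Nat.sInf_mem (hgen g)).2

theorem len_le (hn : 1 ≤ n) (hg : g ∈ Γ ^ n) : len Γ g ≤ n :=
  Nat.sInf_le ⟨hn, hg⟩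

theorem mem_pow_of_len_le (h1 : (1 : G) ∈ Γ) (hgen : ∀ g : G, ∃ r : ℕ, 1 ≤ r ∧ g ∈ Γ ^ r)
    (hg : len Γ g ≤ n) : g ∈ Γ ^ n :=
  Set.pow_subset_pow_right h1 hg (mem_pow_len hgen g)

theorem inv_mem_pow_iff (hinv : Γ⁻¹ = Γ) : g⁻¹ ∈ Γ ^ n ↔ g ∈ Γ ^ n := by
  rw [← Set.mem_inv, ← inv_pow, hinv]

theorem len_inv (hinv : Γ⁻¹ = Γ) (g : G) : len Γ g⁻¹ = len Γ g := by
  simp only [len, inv_mem_pow_iff hinv]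

theorem exists_pow_mul_subset_Kset (hinv : Γ⁻¹ = Γ)
    (hgen : ∀ g : G, ∃ r : ℕ, 1 ≤ r ∧ g ∈ Γ ^ r) (hg : n < len Γ g) :
    ∃ h ∈ Γ ^ (n + 1), ∀ f ∈ Γ ^ n, f * h ∈ Kset Γ g := by
  obtain ⟨k, hk⟩ := Nat.exists_eq_add_of_lt hg
  have hmem : g ∈ Γ ^ k * Γ ^ (n + 1) := by
    rw [← pow_add, show k + (n + 1) = len Γ g by omega]
    exact mem_pow_len hgen g
  obtain ⟨a, ha, h, hh, rfl⟩ := Set.mem_mul.1 hmem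
  refine ⟨h, hh, fun f hf => Set.mem_mul.2 ⟨f * a⁻¹, ?_, a * h, rfl, by group⟩⟩
  rw [show len Γ (a * h) - 1 = n + k by omega, pow_add]
  exact Set.mul_mem_mul hf ((inv_mem_pow_iff hinv).2 ha)

theorem exists_mem_disjoint_pow_len_sub_one {S : Set G} (hS : S.Nonempty) (h1S : (1 : G) ∉ S) :
    ∃ g ∈ S, Disjoint (Γ ^ (len Γ g - 1)) S := by
  obtain ⟨g, hg, hmin⟩ := exists_minimalFor_of_wellFoundedLT (· ∈ S) (len Γ) hS
  refine ⟨g, hg, Set.disjoint_left.2 fun a ha haS => ?_⟩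
  rcases Nat.eq_zero_or_pos (len Γ g - 1) with hzero | hpos
  · rw [hzero, pow_zero, Set.mem_one] at ha
    exact h1S (ha ▸ haS)
  · have hle : len Γ a ≤ len Γ g - 1 := len_le hpos ha
    have hge : len Γ g ≤ len Γ a := hmin haS (by omega)
    omega

theorem isCompact_pow [TopologicalSpace G] [ContinuousMul G] (hc : IsCompact Γ) (n : ℕ) :
    IsCompact (Γ ^ n) := by
  induction n with
  | zero => exact pow_zero Γ ▸ isCompact_singleton
  | succ n ih => exact pow_succ Γ n ▸ ih.mul hc

end WordLength

theorem isOpen_setOf_forall_smul_mem {G X : Type*} [TopologicalSpace G] [TopologicalSpace X]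
    [SMul G X] [ContinuousSMul G X] {K : Set G} {U : Set X} (hK : IsCompact K) (hU : IsOpen U) :
    IsOpen {x | ∀ k ∈ K, k • x ∈ U} :=
  isOpen_iff_mem_nhds.2 fun _ hx => hK.eventually_forall_of_forall_eventually fun k hk =>
    (continuous_snd.smul continuous_fst).continuousAt.eventually_mem (hU.mem_nhds (hx k hk))

section OrbitClosure

variable {G X : Type} [Group G] [TopologicalSpace X] [MulAction G X]

/-- Symmetry of the orbit closure relation `y ∈ closure (G • x)`; by
`forall_exists_isMinimalSet_iff` it means that the space is a union of minimal sets. -/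
def HasSymmOrbitClosures (G X : Type) [Group G] [TopologicalSpace X] [MulAction G X] : Prop :=
  ∀ x y : X, y ∈ closure (orbit G x) → x ∈ closure (orbit G y)

/-- The set `U_G^*` of points whose orbit closure lies in `U`. -/
def orbitCore (G : Type) {X : Type} [Group G] [TopologicalSpace X] [MulAction G X]
    (U : Set X) : Set X :=
  {x | closure (orbit G x) ⊆ U}

theorem mem_orbitCore_iff {U : Set X} (hU : IsClosed U) {x : X} :
    x ∈ orbitCore G U ↔ ∀ g : G, g • x ∈ U :=
  hU.closure_subset_iff.trans Set.range_subset_iff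

theorem upperHemicontinuous_closure_orbit [PrespectralSpace X]
    (hLag : ∀ x : X, IsCompact (closure (orbit G x)))
    (hcore : ∀ U : Set X, IsCompact U → IsOpen U → IsOpen (orbitCore G U)) :
    UpperHemicontinuous fun x : X => closure (orbit G x) := by
  refine upperHemicontinuous_iff_forall_isOpen.2 fun x U hU hxU => ?_
  obtain ⟨V, hVc, hVo, hxV, hVU⟩ :=
    PrespectralSpace.exists_isCompact_and_isOpen_between (hLag x) hU hxU
  exact ((hcore V hVc hVo).eventually_mem hxV).mono fun y hy => hy.trans hVU

theorem hasSymmOrbitClosures_of_netContinuous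
    (h : NetContinuous fun x : X => closure (orbit G x)) : HasSymmOrbitClosures G X := by
  intro x y hy
  have : (𝓝[orbit G x] y).NeBot := mem_closure_iff_nhdsWithin_neBot.1 hy
  obtain ⟨κ, le, xs, hd, -, hxs⟩ :=
    exists_net_monotone_tendsto (𝓝[orbit G x] y) (fun _ => ()) fun _ => Eventually.of_forall
      fun _ => le_rfl
  rw [tendsto_nhdsWithin_iff] at hxs
  have : (tailFilter le).NeBot := neBot_tailFilter hd
  have hx : ∀ᶠ i in tailFilter le, x ∈ closure (orbit G (xs i)) := hxs.2.mono fun i hi =>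
    subset_closure (mem_orbit_symm.1 hi)
  refine (h κ le xs y hd hxs.1).subset ((mem_netLimsup_iff hd).2 ?_)
  exact fun U hU => (hx.mono fun i hi => ⟨x, mem_of_mem_nhds hU, hi⟩).frequently

variable [ContinuousConstSMul G X]

theorem closure_orbit_subset {x y : X} (hy : y ∈ closure (orbit G x)) :
    closure (orbit G y) ⊆ closure (orbit G x) :=
  closure_minimal (Set.range_subset_iff.2 fun g =>
    smul_closure_orbit_subset g x (Set.smul_mem_smul_set hy)) isClosed_closure

theorem forall_exists_isMinimalSet_iff :
    (∀ x : X, ∃ M : Set X, IsMinimalSet G M ∧ x ∈ M) ↔ HasSymmOrbitClosures G X := by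
  constructor
  · intro h x y hy
    obtain ⟨M, hM, hx⟩ := h x
    rw [hM x hx] at hy
    rwa [hM y hy]
  · exact fun h x => ⟨closure (orbit G x),
      fun y hy => (closure_orbit_subset hy).antisymm (closure_orbit_subset (h x y hy)),
      subset_closure (mem_orbit_self x)⟩

theorem lowerHemicontinuous_closure_orbit :
    LowerHemicontinuous fun x : X => closure (orbit G x) := by
  refine lowerHemicontinuous_iff_isOpen_inter_nonempty.2 fun U hU => ?_
  have hunion : {x : X | (closure (orbit G x) ∩ U).Nonempty} = ⋃ g : G, (g • ·) ⁻¹' U := by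
    ext x
    rw [Set.mem_ofPred_eq, closure_inter_open_nonempty_iff hU, Set.mem_iUnion]
    exact ⟨fun ⟨_, ⟨g, rfl⟩, hgU⟩ => ⟨g, hgU⟩, fun ⟨g, hg⟩ => ⟨g • x, ⟨g, rfl⟩, hg⟩⟩
  exact hunion ▸ isOpen_iUnion fun g => hU.preimage (continuous_const_smul g)

theorem isCompact_orbitCore {U : Set X} (hUc : IsCompact U) (hU : IsClosed U) :
    IsCompact (orbitCore G U) := by
  have hinter : orbitCore G U = ⋂ g : G, (g • ·) ⁻¹' U := by
    ext x
    simp only [mem_orbitCore_iff hU, Set.mem_iInter, Set.mem_preimage]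
  refine hUc.of_isClosed_subset ?_ fun x hx => hx (subset_closure (mem_orbit_self x))
  exact hinter ▸ isClosed_iInter fun g => hU.preimage (continuous_const_smul g)

theorem exists_finset_closure_orbit_subset (hsymm : HasSymmOrbitClosures G X) {x : X}
    (hx : IsCompact (closure (orbit G x))) {U : Set X} (hU : U ∈ 𝓝 x) :
    ∃ F : Finset G, closure (orbit G x) ⊆ ⋃ f ∈ F, (f • ·) ⁻¹' interior U := by
  refine hx.elim_finite_subcover _
    (fun f => isOpen_interior.preimage (continuous_const_smul f)) fun y hy => ?_
  obtain ⟨_, hgU, g, rfl⟩ := mem_closure_iff.1 (hsymm x y hy) (interior U) isOpen_interior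
    (mem_interior_iff_mem_nhds.2 hU)
  exact Set.mem_iUnion.2 ⟨g, hgU⟩

theorem exists_finset_smul_mem_of_upperHemicontinuous
    (hupper : UpperHemicontinuous fun x : X => closure (orbit G x))
    (hsymm : HasSymmOrbitClosures G X) {x : X} (hx : IsCompact (closure (orbit G x)))
    {U : Set X} (hU : U ∈ 𝓝 x) :
    ∃ F : Finset G, ∃ V ∈ 𝓝 x, ∀ g : G, ∀ v ∈ V, ∃ f ∈ F, f • g • v ∈ U := by
  obtain ⟨F, hF⟩ := exists_finset_closure_orbit_subset hsymm hx hU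
  have hopen : IsOpen (⋃ f ∈ F, (f • · : X → X) ⁻¹' interior U) :=
    isOpen_biUnion fun f _ => isOpen_interior.preimage (continuous_const_smul f)
  refine ⟨F, _, upperHemicontinuous_iff_forall_isOpen.1 hupper x _ hopen hF, fun g v hv => ?_⟩
  obtain ⟨f, hf, hfU⟩ := Set.mem_iUnion₂.1 (hv (subset_closure ⟨g, rfl⟩))
  exact ⟨f, hf, interior_subset hfU⟩

end OrbitClosure

section AlmostPeriodic

variable {G X : Type} [Group G] [TopologicalSpace G] [TopologicalSpace X] [MulAction G X]

theorem hasSymmOrbitClosures_of_almostPeriodicPt [RegularSpace X] [ContinuousSMul G X]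
    (h : ∀ x : X, AlmostPeriodicPt G x) : HasSymmOrbitClosures G X := by
  intro x y hy
  refine mem_closure_iff_nhds.2 fun U₀ hU₀ => ?_
  obtain ⟨U, hU, hUclosed, hUU₀⟩ := exists_mem_nhds_isClosed_subset hU₀
  obtain ⟨K, hK, hKN⟩ := h x U hU
  have hclosed : IsClosed {z : X | ∃ k ∈ K, k • z ∈ U} := by
    simpa [← isOpen_compl_iff, Set.compl_ofPred] using
      isOpen_setOf_forall_smul_mem (X := X) hK hUclosed.isOpen_compl
  have horbit : orbit G x ⊆ {z : X | ∃ k ∈ K, k • z ∈ U} := by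
    rintro _ ⟨g, rfl⟩
    obtain ⟨a, ha, b, hb, rfl⟩ := Set.mem_mul.1 (hKN ▸ Set.mem_univ g)
    exact ⟨a⁻¹, ha, by simpa [mul_smul] using hb⟩
  obtain ⟨k, -, hk⟩ := closure_minimal horbit hclosed hy
  exact ⟨k • y, hUU₀ hk, k, rfl⟩

theorem almostPeriodicPt_of_forall_exists_finset {x : X}
    (h : ∀ U ∈ 𝓝 x, ∃ F : Finset G, ∀ g : G, ∃ f ∈ F, f • g • x ∈ U) : AlmostPeriodicPt G x := by
  intro U hU
  obtain ⟨F, hF⟩ := h U hU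
  refine ⟨F, F.finite_toSet.isCompact, Set.eq_univ_of_forall fun g => ?_⟩
  obtain ⟨f, hf, hfU⟩ := hF g
  exact Set.mem_mul.2 ⟨f⁻¹, Set.inv_mem_inv.2 hf, f * g, by rwa [← mul_smul] at hfU, by group⟩

end AlmostPeriodic

section Recurrence

variable {G X : Type} [Group G] [TopologicalSpace X] [MulAction G X] {Γ : Set G}

theorem exists_mem_Kset_mem_pow_smul_mem [ContinuousConstSMul G X] (h1 : (1 : G) ∈ Γ)
    (hinv : Γ⁻¹ = Γ) (hgen : ∀ g : G, ∃ r : ℕ, 1 ≤ r ∧ g ∈ Γ ^ r)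
    (hsymm : HasSymmOrbitClosures G X) {x : X} (hx : IsCompact (closure (orbit G x)))
    {U : Set X} (hU : U ∈ 𝓝 x) :
    ∃ n, 1 ≤ n ∧ ∀ g, n ≤ len Γ g → ∃ c ∈ Kset Γ g, c ∈ Γ ^ n ∧ c • x ∈ U := by
  obtain ⟨F, hF⟩ := exists_finset_closure_orbit_subset hsymm hx hU
  let N : ℕ := F.sup (len Γ)
  refine ⟨N + (N + 1), by omega, fun g hg => ?_⟩
  obtain ⟨h, hh, hhg⟩ := exists_pow_mul_subset_Kset hinv hgen (n := N) (g := g) (by omega)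
  obtain ⟨f, hf, hfU⟩ := Set.mem_iUnion₂.1 (hF (subset_closure ⟨h, rfl⟩))
  have hfN : f ∈ Γ ^ N := mem_pow_of_len_le h1 hgen (Finset.le_sup (f := len Γ) hf)
  refine ⟨f * h, hhg f hfN, pow_add Γ N (N + 1) ▸ Set.mul_mem_mul hfN hh, ?_⟩
  rw [mul_smul]
  exact interior_subset hfU

theorem recurrentII_of_hasSymmOrbitClosures [ContinuousConstSMul G X] (h1 : (1 : G) ∈ Γ)
    (hinv : Γ⁻¹ = Γ) (hgen : ∀ g : G, ∃ r : ℕ, 1 ≤ r ∧ g ∈ Γ ^ r)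
    (hsymm : HasSymmOrbitClosures G X) {x : X} (hx : IsCompact (closure (orbit G x))) :
    RecurrentII Γ x := by
  intro U hU ι le g hd hlen
  obtain ⟨n, hn, hreturn⟩ := exists_mem_Kset_mem_pow_smul_mem h1 hinv hgen hsymm hx hU
  have := neBot_tailFilter hd
  refine ⟨n, hn, (frequently_tailFilter hd).1 (Eventually.frequently ?_)⟩
  filter_upwards [(eventually_tailFilter hd).2 (hlen n)] with j hj
  obtain ⟨c, hc, hcn, hcU⟩ := hreturn (g j) hj
  exact ⟨c, hc, hcU, len_le hn hcn⟩

variable [TopologicalSpace G] [ContinuousSMul G X]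

theorem RecurrentII.recurrentI [ContinuousMul G] [RegularSpace X] (hc : IsCompact Γ)
    (h1 : (1 : G) ∈ Γ) (hgen : ∀ g : G, ∃ r : ℕ, 1 ≤ r ∧ g ∈ Γ ^ r) {x : X}
    (h : RecurrentII Γ x) : RecurrentI Γ x := by
  rintro _ ⟨ι, le, g, hd, -, hlen, rfl⟩ U₀ hU₀
  obtain ⟨U, hU, hUclosed, hUU₀⟩ := exists_mem_nhds_isClosed_subset hU₀
  obtain ⟨n, -, hreturn⟩ := h U hU ι le g hd hlen
  have hcompact : IsCompact (Γ ^ n ∩ {c | c • x ∈ U}) :=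
    (isCompact_pow hc n).inter_right (hUclosed.preimage (continuous_id.smul continuous_const))
  have hfreq : ∃ᶠ j in tailFilter le, ((Γ ^ n ∩ {c | c • x ∈ U}) ∩ Kset Γ (g j)).Nonempty :=
    ((frequently_tailFilter hd).2 hreturn).mono fun j ⟨c, hcK, hcU, hcn⟩ =>
      ⟨c, ⟨mem_pow_of_len_le h1 hgen hcn, hcU⟩, hcK⟩
  obtain ⟨c, ⟨-, hcU⟩, hcone⟩ := exists_mem_netLimsup_of_frequently hd hcompact hfreq
  exact ⟨c, hcone, hUU₀ hcU⟩

theorem smul_mem_of_mem_netLimsup {ι : Type} {le : ι → ι → Prop} (hd : DirIdx le)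
    {A : ι → Set G} {w : ι → X} {y : X} (hw : Tendsto w (tailFilter le) (𝓝 y)) {U : Set X}
    (hU : IsClosed U) (hA : ∀ i, ∀ a ∈ A i, a • w i ∈ U) {c : G} (hc : c ∈ NetLimsup le A) :
    c • y ∈ U := by
  by_contra hcy
  obtain ⟨V, hV, W, hW, hVW⟩ := mem_nhds_prod_iff.1
    ((continuous_smul.continuousAt (x := (c, y))).preimage_mem_nhds (hU.isOpen_compl.mem_nhds hcy))
  obtain ⟨i, ⟨a, haV, ha⟩, hwi⟩ :=
    (((mem_netLimsup_iff hd).1 hc V hV).and_eventually (hw hW)).exists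
  exact hVW (Set.mk_mem_prod haV hwi) (hA i a ha)

theorem exists_len_lt_forall_Kset_smul_mem [ContinuousMul G] (hc : IsCompact Γ)
    (h1 : (1 : G) ∈ Γ) (hinv : Γ⁻¹ = Γ) (hgen : ∀ g : G, ∃ r : ℕ, 1 ≤ r ∧ g ∈ Γ ^ r)
    {U : Set X} (hU : IsClopen U) (hcore : ¬ IsOpen (orbitCore G U)) (n : ℕ) :
    ∃ g : G, ∃ w ∈ Γ • U \ U, n < len Γ g ∧ ∀ c ∈ Kset Γ g, c • w ∈ U := by
  obtain ⟨x, hx, hxnhds⟩ : ∃ x ∈ orbitCore G U, orbitCore G U ∉ 𝓝 x := by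
    simpa only [isOpen_iff_mem_nhds, not_forall, exists_prop] using hcore
  have hstay : {z : X | ∀ k ∈ Γ ^ n, k • z ∈ U} ∈ 𝓝 x :=
    (isOpen_setOf_forall_smul_mem (isCompact_pow hc n) hU.isOpen).mem_nhds fun k _ =>
      (mem_orbitCore_iff hU.isClosed).1 hx k
  obtain ⟨z, hzstay, hzcore⟩ := Set.not_subset.1 fun hsub => hxnhds (mem_of_superset hstay hsub)
  have hone : (1 : G) ∉ {g : G | g • z ∉ U} := not_not.2 (hzstay 1 (Set.one_mem_pow h1))
  have hleave : {g : G | g • z ∉ U}.Nonempty := by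
    simpa only [mem_orbitCore_iff hU.isClosed, not_forall] using! hzcore
  obtain ⟨g, hg, hdisj⟩ := exists_mem_disjoint_pow_len_sub_one (Γ := Γ) hleave hone
  have hbefore : ∀ b ∈ Γ ^ (len Γ g - 1), b • z ∈ U := fun b hb =>
    not_not.1 (Set.disjoint_left.1 hdisj hb)
  have hlen : n < len Γ g := lt_of_not_ge fun hle => hg (hzstay g (mem_pow_of_len_le h1 hgen hle))
  have hexit : g • z ∈ Γ • U := by
    have hmem : g ∈ Γ * Γ ^ (len Γ g - 1) := by
      rw [← pow_succ', Nat.sub_add_cancel (by omega)]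
      exact mem_pow_len hgen g
    obtain ⟨a, ha, b, hb, rfl⟩ := Set.mem_mul.1 hmem
    exact mul_smul a b z ▸ Set.smul_mem_smul ha (hbefore b hb)
  refine ⟨g⁻¹, g • z, ⟨hexit, hg⟩, by rwa [len_inv hinv], ?_⟩
  rintro _ ⟨b, hb, _, rfl, rfl⟩
  rw [len_inv hinv] at hb
  simpa [mul_smul] using hbefore b hb

theorem isOpen_orbitCore_of_recurrentI [ContinuousMul G] (hc : IsCompact Γ) (h1 : (1 : G) ∈ Γ)
    (hinv : Γ⁻¹ = Γ) (hgen : ∀ g : G, ∃ r : ℕ, 1 ≤ r ∧ g ∈ Γ ^ r)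
    (hrec : ∀ x : X, RecurrentI Γ x) {U : Set X} (hUc : IsCompact U) (hU : IsClopen U) :
    IsOpen (orbitCore G U) := by
  by_contra hcore
  choose g w hw hlen hK using exists_len_lt_forall_Kset_smul_mem hc h1 hinv hgen hU hcore
  obtain ⟨y, hy, hwy⟩ := ((hc.smul_set hUc).diff hU.isOpen).exists_mapClusterPt
    (tendsto_principal.2 (Eventually.of_forall hw) : map w atTop ≤ _)
  obtain ⟨𝒰, h𝒰, hw𝒰⟩ := mapClusterPt_iff_ultrafilter.1 hwy
  have hlen𝒰 : Tendsto (fun n => len Γ (g n)) 𝒰 atTop :=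
    (tendsto_atTop_mono (fun n => (hlen n).le) tendsto_id).mono_left h𝒰
  obtain ⟨κ, le, a, hd, hmono, ha⟩ := exists_net_monotone_tendsto (𝒰 : Filter ℕ)
    (fun n => len Γ (g n)) fun n => hlen𝒰.eventually_ge_atTop _
  have hcone : IsCone Γ (NetLimsup le fun i => Kset Γ (g (a i))) :=
    ⟨κ, le, fun i => g (a i), hd, hmono,
      fun n => (eventually_tailFilter hd).1 ((hlen𝒰.comp ha).eventually_ge_atTop n), rfl⟩
  obtain ⟨c, hlimsup, hcy⟩ := hrec y _ hcone Uᶜ (hU.isClosed.isOpen_compl.mem_nhds hy.2)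
  exact hcy (smul_mem_of_mem_netLimsup hd (hw𝒰.comp ha) hU.isClosed (fun i => hK (a i)) hlimsup)

end Recurrence

theorem statement0_general {G X : Type} [Group G] [TopologicalSpace G] [ContinuousMul G]
    [TopologicalSpace X] [WeaklyLocallyCompactSpace X]
    [MulAction G X] [ContinuousSMul G X]
    (hLag : ∀ x : X, IsCompact (closure (orbit G x)))
    (Γ : Set G) (hΓc : IsCompact Γ) (hΓ1 : (1 : G) ∈ Γ) (hΓinv : Γ⁻¹ = Γ)
    (hΓgen : ∀ g : G, ∃ r : ℕ, 1 ≤ r ∧ g ∈ Γ ^ r)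
    (h0dim : ∀ x : X, ∀ U ∈ 𝓝 x, ∃ V : Set X, IsClopen V ∧ x ∈ V ∧ V ⊆ U) :
    List.TFAE
      [ (∀ x : X, RecurrentI Γ x),
        (∀ x : X, RecurrentII Γ x),
        (∀ x : X, AlmostPeriodicPt G x),
        (∀ x : X, ∃ M : Set X, IsMinimalSet G M ∧ x ∈ M),
        IsClosed {p : X × X | p.2 ∈ closure (orbit G p.1)},
        (∀ (ι : Type) (le : ι → ι → Prop) (xs : ι → X) (x : X),
          DirIdx le → (∀ U ∈ 𝓝 x, ∃ i, ∀ j, le i j → xs j ∈ U) →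
          NetLimsup le (fun i => closure (orbit G (xs i)))
            = closure (orbit G x)),
        (∀ (x : X) (U : Set X), IsOpen U → closure (orbit G x) ⊆ U →
          ∃ V ∈ 𝓝 x, ∀ y ∈ V, closure (orbit G y) ⊆ U),
        (∀ U : Set X, IsCompact U → IsOpen U →
          IsCompact {x : X | closure (orbit G x) ⊆ U} ∧
            IsOpen {x : X | closure (orbit G x) ⊆ U}),
        (∀ x : X, ∀ U ∈ 𝓝 x, ∃ F : Finset G, ∃ V ∈ 𝓝 x,
          ∀ g : G, ∀ v ∈ V, ∃ f ∈ F, f • g • v ∈ U) ] := by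
  have hbasis : IsTopologicalBasis {V : Set X | IsClopen V} :=
    isTopologicalBasis_of_isOpen_of_nhds (fun V hV => hV.isOpen) fun x U hxU hU =>
      h0dim x U (hU.mem_nhds hxU)
  have := prespectralSpace_of_isTopologicalBasis_isClopen hbasis
  have := CompletelyRegularSpace.of_isTopologicalBasis_clopens hbasis
  rw [forall_exists_isMinimalSet_iff, ← netContinuous_iff (f := fun x : X => closure (orbit G x)),
    ← upperHemicontinuous_iff_exists_mem_nhds (f := fun x : X => closure (orbit G x))]
  tfae_have 3 → 4 := hasSymmOrbitClosures_of_almostPeriodicPt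
  tfae_have 4 → 2 := fun h x => recurrentII_of_hasSymmOrbitClosures hΓ1 hΓinv hΓgen h (hLag x)
  tfae_have 2 → 1 := fun h x => (h x).recurrentI hΓc hΓ1 hΓgen
  tfae_have 1 → 8 := fun h U hUc hUo =>
    have hU : IsClopen U := isClopen_of_isCompact_of_isOpen hUc hUo
    ⟨isCompact_orbitCore hUc hU.isClosed,
      isOpen_orbitCore_of_recurrentI hΓc hΓ1 hΓinv hΓgen h hUc hU⟩
  tfae_have 8 → 7 := fun h =>
    upperHemicontinuous_closure_orbit hLag fun U hUc hUo => (h U hUc hUo).2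
  tfae_have 7 → 5 := fun h =>
    isClosed_graph_of_upperHemicontinuous h fun _ => isClosed_closure
  tfae_have 5 → 6 := netContinuous_of_isClosed_graph lowerHemicontinuous_closure_orbit
  tfae_have 6 → 4 := hasSymmOrbitClosures_of_netContinuous
  tfae_have 7 → 9 := fun h x U hU => exists_finset_smul_mem_of_upperHemicontinuous h
    (tfae_6_to_4 (tfae_5_to_6 (tfae_7_to_5 h))) (hLag x) hU
  tfae_have 9 → 3 := fun h x => almostPeriodicPt_of_forall_exists_finset fun U hU =>
    (h x U hU).imp fun F ⟨V, hV, hF⟩ g => hF g x (mem_of_mem_nhds hV)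
  tfae_finish

theorem statement0 {G X : Type} [Group G] [TopologicalSpace G] [T2Space G]
    [ContinuousMul G] [UniformSpace X] [T2Space X] [LocallyCompactSpace X]
    [MulAction G X] [ContinuousSMul G X]
    (hLag : ∀ x : X, IsCompact (closure (MulAction.orbit G x)))
    (Γ : Set G) (hΓc : IsCompact Γ) (hΓ1 : (1 : G) ∈ Γ) (hΓinv : Γ⁻¹ = Γ)
    (hΓgen : ∀ g : G, ∃ r : ℕ, 1 ≤ r ∧ g ∈ Γ ^ r)
    (h0dim : ∀ x : X, ∀ U ∈ 𝓝 x, ∃ V : Set X, IsClopen V ∧ x ∈ V ∧ V ⊆ U) :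
    List.TFAE
      [ (∀ x : X, RecurrentI Γ x),
        (∀ x : X, RecurrentII Γ x),
        (∀ x : X, AlmostPeriodicPt G x),
        (∀ x : X, ∃ M : Set X, IsMinimalSet G M ∧ x ∈ M),
        IsClosed {p : X × X | p.2 ∈ closure (MulAction.orbit G p.1)},
        (∀ (ι : Type) (le : ι → ι → Prop) (xs : ι → X) (x : X),
          DirIdx le → (∀ U ∈ 𝓝 x, ∃ i, ∀ j, le i j → xs j ∈ U) →
          NetLimsup le (fun i => closure (MulAction.orbit G (xs i)))
            = closure (MulAction.orbit G x)),
        (∀ (x : X) (U : Set X), IsOpen U → closure (MulAction.orbit G x) ⊆ U →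
          ∃ V ∈ 𝓝 x, ∀ y ∈ V, closure (MulAction.orbit G y) ⊆ U),
        (∀ U : Set X, IsCompact U → IsOpen U →
          IsCompact {x : X | closure (MulAction.orbit G x) ⊆ U} ∧
            IsOpen {x : X | closure (MulAction.orbit G x) ⊆ U}),
        (∀ x : X, ∀ U ∈ 𝓝 x, ∃ F : Finset G, ∃ V ∈ 𝓝 x,
          ∀ g : G, ∀ v ∈ V, ∃ f ∈ F, f • g • v ∈ U) ] :=
  statement0_general hLag Γ hΓc hΓ1 hΓinv hΓgen h0dim
end

section
/- Let G be a para-topological group compactly generated by Γ, acting jointly continuously on a locally compact Hausdorff space X (orbit closures are not assumed compact). Let V ⊆ X be an open set such that V_G^∞ = ⋂_{g∈G} g•V is compact. Then V_G^∞ is open if and only if closure(G•x) ∩ V_G^∞ = ∅ for every x ∈ X \ V_G^∞. -/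
open Pointwise Filter Topology

/-!
An orbit whose closure meets an open invariant set enters that set, hence lies in it.

Conversely, suppose every orbit closure based outside the compact set `V_G^∞` misses `V_G^∞`. Choose
a compact `N` with `V_G^∞ ⊆ interior N ⊆ N ⊆ V` and an open `U` with `V_G^∞ ⊆ U ⊆ N` and
`Γ • U ⊆ N`, and let `N_k` be the set of points which `Γ ^ k` keeps in `N`. The `N_k` decrease to
`V_G^∞`, so each orbit based outside `V_G^∞` misses some `N_k`; by compactness of `N \ U`, one `k`
serves all of `N \ U`, that is, `N \ U` is disjoint from `Γ ^ k • N_k`. Now if `Γ ^ n • x ⊆ U` for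
some `n ≥ k`, then `Γ ^ (n + 1) • x` lies in `N` and in `Γ ^ k • N_k`, hence again in `U`. So the
open set of those `x` with `Γ ^ k • x ⊆ U` is trapped in `V` forever, and it coincides with `V_G^∞`.
-/

/-- The set of points that every element of `S` maps into `A`. For `S = univ` in a group this is
`A_G^∞ = ⋂ g, g • A`; for `S = Γ ^ k` it collects the points that words of length `k`
keep in `A`. -/
def stayingSet {G X : Type*} [SMul G X] (S : Set G) (A : Set X) : Set X :=
  {x | ∀ g ∈ S, g • x ∈ A}

section Algebra

variable {G X : Type*}

section SMul

variable [SMul G X] {S T : Set G} {A B : Set X}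

theorem stayingSet_anti_left (h : S ⊆ T) : stayingSet T A ⊆ stayingSet S A :=
  fun _ hx g hg => hx g (h hg)

theorem stayingSet_mono_right (h : A ⊆ B) : stayingSet S A ⊆ stayingSet S B :=
  fun _ hx g hg => h (hx g hg)

end SMul

section Monoid

variable [Monoid G] [MulAction G X] {S T Γ : Set G} {A B N U : Set X} {k n : ℕ}

theorem stayingSet_one : stayingSet (1 : Set G) A = A := by
  simp [stayingSet]

theorem stayingSet_subset_of_one_mem (h : (1 : G) ∈ S) : stayingSet S A ⊆ A :=
  fun x hx => one_smul G x ▸ hx 1 h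

theorem stayingSet_mul : stayingSet (S * T) A = stayingSet T (stayingSet S A) := by
  ext x
  refine ⟨fun h b hb a ha => mul_smul a b x ▸ h (a * b) (Set.mul_mem_mul ha hb), ?_⟩
  rintro h _ ⟨a, ha, b, hb, rfl⟩
  exact (mul_smul a b x).symm ▸ h b hb a ha

theorem smul_stayingSet_mul_subset : T • stayingSet (S * T) A ⊆ stayingSet S A := by
  rw [stayingSet_mul, Set.smul_subset_iff]
  exact fun g hg x hx => hx g hg

theorem stayingSet_univ_subset_stayingSet (h : stayingSet (Set.univ : Set G) A ⊆ B) :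
    stayingSet (Set.univ : Set G) A ⊆ stayingSet S B :=
  fun x hx g _ => h fun g' _ => mul_smul g' g x ▸ hx (g' * g) trivial

theorem stayingSet_univ_eq_iInter_pow (hΓgen : ∀ g : G, ∃ r : ℕ, g ∈ Γ ^ r) :
    stayingSet (Set.univ : Set G) A = ⋂ k : ℕ, stayingSet (Γ ^ k) A := by
  refine (Set.subset_iInter fun k => stayingSet_anti_left (Set.subset_univ _)).antisymm ?_
  intro x hx g _
  obtain ⟨r, hr⟩ := hΓgen g
  exact Set.mem_iInter.1 hx r g hr

theorem antitone_pow_smul_stayingSet_pow :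
    Antitone fun k : ℕ => Γ ^ k • stayingSet (Γ ^ k) N := by
  intro k n hkn
  obtain ⟨m, rfl⟩ := Nat.exists_eq_add_of_le hkn
  calc Γ ^ (k + m) • stayingSet (Γ ^ (k + m)) N
      = Γ ^ k • Γ ^ m • stayingSet (Γ ^ k * Γ ^ m) N := by rw [pow_add, mul_smul]
    _ ⊆ Γ ^ k • stayingSet (Γ ^ k) N := Set.smul_subset_smul_left smul_stayingSet_mul_subset

theorem stayingSet_pow_subset_stayingSet_pow_of_le (hΓU : U ⊆ stayingSet Γ N)
    (hU : N ∩ Γ ^ k • stayingSet (Γ ^ k) N ⊆ U) (hkn : k ≤ n) :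
    stayingSet (Γ ^ k) U ⊆ stayingSet (Γ ^ n) U := by
  induction n, hkn using Nat.le_induction with
  | base => exact subset_rfl
  | succ n hkn ih =>
    intro x hx g hg
    have hxN : x ∈ stayingSet (Γ ^ (n + 1)) N := by
      rw [pow_succ', stayingSet_mul]
      exact stayingSet_mono_right hΓU (ih hx)
    exact hU ⟨hxN g hg, antitone_pow_smul_stayingSet_pow (hkn.trans n.le_succ)
      (Set.smul_mem_smul hg hxN)⟩

end Monoid

theorem iInter_smul_eq_stayingSet_univ [Group G] [MulAction G X] (A : Set X) :
    ⋂ g : G, g • A = stayingSet (Set.univ : Set G) A := by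
  ext x
  simp only [Set.mem_iInter, Set.mem_smul_set_iff_inv_smul_mem]
  exact ⟨fun h g _ => inv_inv g ▸ h g⁻¹, fun h g => h g⁻¹ trivial⟩

theorem disjoint_orbit_stayingSet_univ [Group G] [MulAction G X] {A : Set X} {x : X}
    (hx : x ∉ stayingSet (Set.univ : Set G) A) :
    Disjoint (MulAction.orbit G x) (stayingSet (Set.univ : Set G) A) := by
  rw [Set.disjoint_left]
  rintro _ ⟨g, rfl⟩ hgx
  refine hx fun h _ => ?_
  simpa only [smul_smul, inv_mul_cancel_right] using hgx (h * g⁻¹) trivial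

end Algebra

section Topology

variable {G X : Type*} [TopologicalSpace X]

theorem isClosed_stayingSet [SMul G X] [ContinuousConstSMul G X] {S : Set G} {A : Set X}
    (hA : IsClosed A) : IsClosed (stayingSet S A) := by
  simp only [stayingSet, Set.ofPred_forall]
  exact isClosed_biInter fun g _ => hA.preimage (continuous_const_smul g)

theorem isOpen_stayingSet [TopologicalSpace G] [SMul G X] [ContinuousSMul G X] {S : Set G}
    {A : Set X} (hS : IsCompact S) (hA : IsOpen A) : IsOpen (stayingSet S A) := by
  refine isOpen_iff_mem_nhds.2 fun x hx => hS.eventually_forall_of_forall_eventually fun g hg => ?_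
  exact (continuous_snd.smul continuous_fst).continuousAt.eventually_mem (hA.mem_nhds (hx g hg))

section Monoid

variable [TopologicalSpace G] [Monoid G] [MulAction G X] [ContinuousSMul G X] {Γ : Set G}

theorem isOpen_stayingSet_pow {A : Set X} (hΓ : IsCompact Γ) (hA : IsOpen A) :
    ∀ k : ℕ, IsOpen (stayingSet (Γ ^ k) A)
  | 0 => by rwa [pow_zero, stayingSet_one]
  | k + 1 => by
    rw [pow_succ, stayingSet_mul]
    exact isOpen_stayingSet hΓ (isOpen_stayingSet_pow hΓ hA k)

theorem isCompact_pow_smul {A : Set X} (hΓ : IsCompact Γ) (hA : IsCompact A) :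
    ∀ k : ℕ, IsCompact (Γ ^ k • A)
  | 0 => by rwa [pow_zero, one_smul]
  | k + 1 => by
    rw [pow_succ', mul_smul]
    exact hΓ.smul_set (isCompact_pow_smul hΓ hA k)

end Monoid

theorem exists_disjoint_stayingSet_pow [Monoid G] [MulAction G X] [ContinuousConstSMul G X]
    {Γ : Set G} (hΓ1 : (1 : G) ∈ Γ) (hΓgen : ∀ g : G, ∃ r : ℕ, g ∈ Γ ^ r) {N F : Set X}
    (hN : IsCompact N) (hNcl : IsClosed N) (hF : IsClosed F)
    (hFN : Disjoint F (stayingSet (Set.univ : Set G) N)) :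
    ∃ k : ℕ, Disjoint F (stayingSet (Γ ^ k) N) := by
  have hanti : Antitone fun k : ℕ => stayingSet (Γ ^ k) N :=
    fun _ _ h => stayingSet_anti_left (Set.pow_subset_pow_right hΓ1 h)
  rw [stayingSet_univ_eq_iInter_pow hΓgen] at hFN
  obtain ⟨k, hk⟩ := (hN.inter_right hF).elim_directed_family_closed
    (fun k => stayingSet (Γ ^ k) N) (fun _ => isClosed_stayingSet hNcl)
    (hFN.mono_left Set.inter_subset_right).inter_eq hanti.directed_ge
  refine ⟨k, Set.disjoint_left.2 fun x hxF hx => ?_⟩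
  have hxN : x ∈ N := stayingSet_subset_of_one_mem (Set.one_mem_pow hΓ1) hx
  exact Set.eq_empty_iff_forall_notMem.1 hk x ⟨⟨hxN, hxF⟩, hx⟩

section Group

variable [TopologicalSpace G] [Group G] [MulAction G X] [ContinuousSMul G X] [T2Space X]
  {Γ : Set G}

theorem exists_disjoint_pow_smul_stayingSet_pow (hΓ : IsCompact Γ) (hΓ1 : (1 : G) ∈ Γ)
    (hΓgen : ∀ g : G, ∃ r : ℕ, g ∈ Γ ^ r) {L N : Set X} (hL : IsCompact L) (hN : IsCompact N)
    (horbit : ∀ y ∈ L,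
      Disjoint (closure (MulAction.orbit G y)) (stayingSet (Set.univ : Set G) N)) :
    ∃ k : ℕ, Disjoint L (Γ ^ k • stayingSet (Γ ^ k) N) := by
  have hcompact (k : ℕ) : IsCompact (stayingSet (Γ ^ k) N) :=
    hN.of_isClosed_subset (isClosed_stayingSet hN.isClosed)
      (stayingSet_subset_of_one_mem (Set.one_mem_pow hΓ1))
  have hempty : L ∩ ⋂ k : ℕ, Γ ^ k • stayingSet (Γ ^ k) N = ∅ := by
    refine Set.eq_empty_of_forall_notMem fun y ⟨hyL, hy⟩ => ?_
    obtain ⟨k, hk⟩ := exists_disjoint_stayingSet_pow hΓ1 hΓgen hN hN.isClosed isClosed_closure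
      (horbit y hyL)
    obtain ⟨g, -, w, hw, rfl⟩ := Set.mem_smul.1 (Set.mem_iInter.1 hy k)
    have hworbit : w ∈ MulAction.orbit G (g • w) := ⟨g⁻¹, inv_smul_smul g w⟩
    exact Set.disjoint_left.1 hk (subset_closure hworbit) hw
  obtain ⟨k, hk⟩ := hL.elim_directed_family_closed _
    (fun k => (isCompact_pow_smul hΓ (hcompact k) k).isClosed) hempty
    antitone_pow_smul_stayingSet_pow.directed_ge
  exact ⟨k, Set.disjoint_iff_inter_eq_empty.2 hk⟩

theorem isOpen_stayingSet_univ_of_disjoint_closure_orbit [LocallyCompactSpace X]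
    (hΓ : IsCompact Γ) (hΓ1 : (1 : G) ∈ Γ) (hΓgen : ∀ g : G, ∃ r : ℕ, g ∈ Γ ^ r) {V : Set X}
    (hV : IsOpen V) (hVc : IsCompact (stayingSet (Set.univ : Set G) V))
    (horbit : ∀ x ∉ stayingSet (Set.univ : Set G) V,
      Disjoint (closure (MulAction.orbit G x)) (stayingSet (Set.univ : Set G) V)) :
    IsOpen (stayingSet (Set.univ : Set G) V) := by
  obtain ⟨N, hN, hVN, hNV⟩ :=
    exists_compact_between hVc hV (stayingSet_subset_of_one_mem (Set.mem_univ 1))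
  set U := stayingSet Γ (interior N)
  have hUo : IsOpen U := isOpen_stayingSet hΓ isOpen_interior
  have hVU : stayingSet (Set.univ : Set G) V ⊆ U := stayingSet_univ_subset_stayingSet hVN
  have hUV : U ⊆ V := (stayingSet_subset_of_one_mem hΓ1).trans (interior_subset.trans hNV)
  obtain ⟨k, hk⟩ := exists_disjoint_pow_smul_stayingSet_pow hΓ hΓ1 hΓgen (hN.diff hUo) hN
    fun y hy => (horbit y fun hyV => hy.2 (hVU hyV)).mono_right (stayingSet_mono_right hNV)
  have hreturn : N ∩ Γ ^ k • stayingSet (Γ ^ k) N ⊆ U := fun y ⟨hyN, hy⟩ =>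
    by_contra fun hyU => Set.disjoint_left.1 hk ⟨hyN, hyU⟩ hy
  have htrap : stayingSet (Γ ^ k) U ⊆ stayingSet (Set.univ : Set G) V := by
    rw [stayingSet_univ_eq_iInter_pow hΓgen]
    refine Set.subset_iInter fun n => ?_
    calc stayingSet (Γ ^ k) U
        ⊆ stayingSet (Γ ^ max k n) U := stayingSet_pow_subset_stayingSet_pow_of_le
          (stayingSet_mono_right interior_subset) hreturn (le_max_left k n)
      _ ⊆ stayingSet (Γ ^ n) U :=
          stayingSet_anti_left (Set.pow_subset_pow_right hΓ1 (le_max_right k n))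
      _ ⊆ stayingSet (Γ ^ n) V := stayingSet_mono_right hUV
  rw [(stayingSet_univ_subset_stayingSet hVU).antisymm htrap]
  exact isOpen_stayingSet_pow hΓ hUo k

theorem statement1_general [LocallyCompactSpace X] (hΓ : IsCompact Γ)
    (hΓgen : ∀ g : G, ∃ r : ℕ, g ∈ Γ ^ r) {V : Set X} (hV : IsOpen V)
    (hVc : IsCompact (⋂ g : G, g • V)) :
    IsOpen (⋂ g : G, g • V) ↔
      ∀ x : X, x ∉ (⋂ g : G, g • V) →
        closure (MulAction.orbit G x) ∩ (⋂ g : G, g • V) = ∅ := by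
  simp only [← Set.disjoint_iff_inter_eq_empty]
  rw [iInter_smul_eq_stayingSet_univ] at hVc ⊢
  refine ⟨fun hopen x hx => (disjoint_orbit_stayingSet_univ hx).closure_left hopen, ?_⟩
  exact isOpen_stayingSet_univ_of_disjoint_closure_orbit (hΓ.insert 1) (Set.mem_insert 1 Γ)
    (fun g => (hΓgen g).imp fun r hr => Set.pow_subset_pow_left (Set.subset_insert 1 Γ) hr) hV hVc

end Group

end Topology

/-- for a jointly continuous action of a compactly generated
para-topological group `G` on a locally compact Hausdorff space `X` and an open
set `V` with `V_G^∞ = ⋂_g g•V` compact, `V_G^∞` is open iff the orbit closure of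
every point outside `V_G^∞` is disjoint from `V_G^∞`. -/
theorem statement1 {G X : Type} [Group G] [TopologicalSpace G] [T2Space G]
    [ContinuousMul G] [TopologicalSpace X] [T2Space X] [LocallyCompactSpace X]
    [MulAction G X] [ContinuousSMul G X]
    (Γ : Set G) (hΓc : IsCompact Γ) (hΓ1 : (1 : G) ∈ Γ) (hΓinv : Γ⁻¹ = Γ)
    (hΓgen : ∀ g : G, ∃ r : ℕ, 1 ≤ r ∧ g ∈ Γ ^ r)
    (V : Set X) (hV : IsOpen V) (hVc : IsCompact (⋂ g : G, g • V)) :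
    IsOpen (⋂ g : G, g • V) ↔
      ∀ x : X, x ∉ (⋂ g : G, g • V) →
        closure (MulAction.orbit G x) ∩ (⋂ g : G, g • V) = ∅ :=
  statement1_general hΓc (fun g => (hΓgen g).imp fun _ => And.right) hV hVc
end

section
/- Let (G,X) be a minimal flow (closure(G•x) = X for every x ∈ X, so X is compact) and let H be a syndetic normal subgroup of G, i.e. H ⊴ G and K⁻¹H = G for some compact K ⊆ G. Then the H-orbit closure mapping x ↦ closure(H•x) is continuous from X into the closed subsets of X with the Vietoris topology; explicitly, whenever a net x_i → x in X: (a) for every open U ⊇ closure(H•x), eventually closure(H•x_i) ⊆ U, and (b) for every open U with U ∩ closure(H•x) ≠ ∅, eventually closure(H•x_i) ∩ U ≠ ∅. -/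
open Pointwise Filter Topology

/-- The orbit of a point under a subset of the group. -/
def subOrbit {G X : Type} [Group G] [MulAction G X] (S : Set G) (x : X) : Set X :=
  (fun g : G => g • x) '' S

/-!
Let `A` be a minimal set of the normal syndetic subgroup `N`, and let `K` be compact with
`K * N = G`. By normality every translate `g • A` is again a minimal set of `N`. The set `K • A` is
compact and contains a dense `G`-orbit, so it is all of `X`. Hence the relation
`y ∈ closure (N • x)` is `K • (A ×ˢ A)` for the diagonal action on `X × X`, which is compact and
therefore closed. In a compact space a closed graph means upper hemicontinuity. Lower hemicontinuity
holds for the orbit closures of any action by continuous maps.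
-/

/-- A subset `S` of a group with a topology is syndetic if `K⁻¹ * S` is the whole group for some
compact `K`. -/
def IsSyndetic {G : Type*} [Group G] [TopologicalSpace G] (S : Set G) : Prop :=
  ∃ K : Set G, IsCompact K ∧ K⁻¹ * S = Set.univ

/-- A minimal set of an action, encoded as a nonempty set which is the orbit closure of each of its
points; such a set is automatically closed and invariant. -/
structure IsMinimalSet_s3 (M : Type*) {X : Type*} [Monoid M] [MulAction M X] [TopologicalSpace X]
    (A : Set X) : Prop where
  nonempty : A.Nonempty
  closure_orbit_eq : ∀ x ∈ A, closure (MulAction.orbit M x) = A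

section MinimalSets

variable {M X : Type*} [Monoid M] [MulAction M X] [TopologicalSpace X] {A : Set X}

theorem IsMinimalSet_s3.isClosed (hA : IsMinimalSet_s3 M A) : IsClosed A := by
  obtain ⟨x, hx⟩ := hA.nonempty
  exact hA.closure_orbit_eq x hx ▸ isClosed_closure

theorem IsMinimalSet_s3.orbit_subset (hA : IsMinimalSet_s3 M A) {x : X} (hx : x ∈ A) :
    MulAction.orbit M x ⊆ A :=
  subset_closure.trans (hA.closure_orbit_eq x hx).subset

theorem exists_minimal_isClosed_nonempty_smul_invariant (M X : Type*) [Monoid M] [MulAction M X]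
    [TopologicalSpace X] [CompactSpace X] [Nonempty X] :
    ∃ A : Set X, Minimal (fun S ↦ IsClosed S ∧ S.Nonempty ∧ ∀ c : M, c • S ⊆ S) A := by
  refine zorn_superset {S : Set X | IsClosed S ∧ S.Nonempty ∧ ∀ c : M, c • S ⊆ S}
    fun C hC hchain ↦ ?_
  rcases C.eq_empty_or_nonempty with rfl | hne
  · exact ⟨Set.univ, ⟨isClosed_univ, Set.univ_nonempty, fun _ ↦ Set.subset_univ _⟩, by simp⟩
  have : Nonempty C := hne.to_subtype
  have hclosed : IsClosed (⋂₀ C) := isClosed_sInter fun S hS ↦ (hC hS).1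
  have hnonempty : (⋂₀ C).Nonempty :=
    IsCompact.nonempty_sInter_of_directed_nonempty_isCompact_isClosed
      (IsChain.directedOn hchain.symm) (fun S hS ↦ (hC hS).2.1)
      (fun S hS ↦ (hC hS).1.isCompact) (fun S hS ↦ (hC hS).1)
  have hinvariant (c : M) : c • ⋂₀ C ⊆ ⋂₀ C :=
    Set.subset_sInter fun S hS ↦
      (Set.smul_set_mono (Set.sInter_subset_of_mem hS)).trans ((hC hS).2.2 c)
  exact ⟨⋂₀ C, ⟨hclosed, hnonempty, hinvariant⟩, fun _ ↦ Set.sInter_subset_of_mem⟩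

theorem exists_isMinimalSet (M X : Type*) [Monoid M] [MulAction M X] [TopologicalSpace X]
    [CompactSpace X] [Nonempty X] [ContinuousConstSMul M X] : ∃ A : Set X, IsMinimalSet_s3 M A := by
  obtain ⟨A, ⟨hclosed, hnonempty, hinvariant⟩, hminimal⟩ :=
    exists_minimal_isClosed_nonempty_smul_invariant M X
  refine ⟨A, hnonempty, fun x hx ↦ ?_⟩
  have hsub : closure (MulAction.orbit M x) ⊆ A := closure_minimal
    (Set.range_subset_iff.2 fun c ↦ hinvariant c (Set.smul_mem_smul_set hx)) hclosed
  exact hsub.antisymm <| hminimal ⟨isClosed_closure, (MulAction.nonempty_orbit x).closure,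
    fun c ↦ smul_closure_orbit_subset c x⟩ hsub

end MinimalSets

section Hemicontinuity

variable {X Y : Type*} [TopologicalSpace X] [TopologicalSpace Y]

theorem continuous_vietoris_iff {f : X → Set Y} :
    Continuous[_, .vietoris Y] f ↔ UpperHemicontinuous f ∧ LowerHemicontinuous f := by
  rw [TopologicalSpace.vietoris.continuous_iff, upperHemicontinuous_iff_isOpen_preimage_Iic,
    lowerHemicontinuous_iff_isClosed_preimage_Iic]
  rfl

theorem exists_forall_of_continuous_vietoris {f : X → Set Y} (hf : Continuous[_, .vietoris Y] f)
    {ι : Type*} {le : ι → ι → Prop} {xs : ι → X} {x : X}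
    (hxs : ∀ U ∈ 𝓝 x, ∃ i, ∀ j, le i j → xs j ∈ U) :
    (∀ U, IsOpen U → f x ⊆ U → ∃ i, ∀ j, le i j → f (xs j) ⊆ U) ∧
      ∀ U, IsOpen U → (U ∩ f x).Nonempty → ∃ i, ∀ j, le i j → (f (xs j) ∩ U).Nonempty := by
  obtain ⟨hupper, hlower⟩ := continuous_vietoris_iff.1 hf
  refine ⟨fun U hU hxU ↦ hxs _ (upperHemicontinuous_iff_forall_isOpen.1 hupper x U hU hxU),
    fun U hU hxU ↦ ?_⟩
  rw [Set.inter_comm] at hxU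
  exact hxs _ ((lowerHemicontinuous_iff_isOpen_inter_nonempty.1 hlower U hU).mem_nhds hxU)

theorem upperHemicontinuous_of_isClosed_graph [CompactSpace Y] {f : X → Set Y}
    (hf : IsClosed {p : X × Y | p.2 ∈ f p.1}) : UpperHemicontinuous f := by
  refine upperHemicontinuous_iff_isClosed_compl_preimage_Iic_compl.2 fun F hF ↦ ?_
  convert isClosedMap_fst_of_compactSpace _ (hf.inter (hF.preimage continuous_snd)) using 1
  ext x
  simp [Set.not_subset]

theorem lowerHemicontinuous_closure_orbit_s3 (M : Type*) [Monoid M] [MulAction M X]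
    [ContinuousConstSMul M X] :
    LowerHemicontinuous fun x : X ↦ closure (MulAction.orbit M x) := by
  refine lowerHemicontinuous_iff_isOpen_inter_nonempty.2 fun U hU ↦ ?_
  have hpreimage : {x : X | (closure (MulAction.orbit M x) ∩ U).Nonempty} =
      ⋃ c : M, (c • ·) ⁻¹' U := by
    ext x
    simp [closure_inter_open_nonempty_iff hU, Set.inter_nonempty, MulAction.mem_orbit_iff]
  rw [hpreimage]
  exact isOpen_iUnion fun c ↦ hU.preimage (continuous_const_smul c)

end Hemicontinuity

section NormalSubgroup

variable {G X : Type*} [Group G] [MulAction G X] [TopologicalSpace X] {N : Subgroup G} {A : Set X}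

theorem smul_closure_orbit [ContinuousConstSMul G X] [N.Normal] (g : G) (x : X) :
    g • closure (MulAction.orbit N x) = closure (MulAction.orbit N (g • x)) := by
  rw [← closure_smul, MulAction.smul_orbit_eq_orbit_smul]

theorem IsMinimalSet_s3.smul [ContinuousConstSMul G X] [N.Normal] (hA : IsMinimalSet_s3 N A) (g : G) :
    IsMinimalSet_s3 N (g • A) where
  nonempty := hA.nonempty.smul_set
  closure_orbit_eq := by
    rintro _ ⟨x, hx, rfl⟩
    exact (smul_closure_orbit g x).symm.trans (congrArg (g • ·) (hA.closure_orbit_eq x hx))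

theorem IsMinimalSet_s3.setOf_mem_closure_orbit [ContinuousConstSMul G X] [N.Normal]
    (hA : IsMinimalSet_s3 N A) {K : Set G} (hKA : K • A = Set.univ) :
    {p : X × X | p.2 ∈ closure (MulAction.orbit N p.1)} = K • A ×ˢ A := by
  ext ⟨x, y⟩
  constructor
  · intro hy
    obtain ⟨k, hk, a, ha, rfl⟩ := Set.mem_smul.1 (hKA ▸ Set.mem_univ x)
    obtain ⟨b, hb, rfl⟩ :=
      ((hA.smul k).closure_orbit_eq _ (Set.smul_mem_smul_set ha)).subset hy
    exact Set.smul_mem_smul hk (Set.mk_mem_prod ha hb)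
  · rintro ⟨k, -, ⟨a, b⟩, ⟨ha, hb⟩, hab⟩
    obtain ⟨rfl, rfl⟩ := Prod.mk.inj hab
    exact ((hA.smul k).closure_orbit_eq _ (Set.smul_mem_smul_set ha)).superset
      (Set.smul_mem_smul_set hb)

end NormalSubgroup

section SyndeticNormalSubgroup

variable {G X : Type*} [Group G] [TopologicalSpace G] {N : Subgroup G}

theorem IsSyndetic.exists_isCompact_mul_eq_univ [N.Normal] (hN : IsSyndetic (N : Set G)) :
    ∃ K : Set G, IsCompact K ∧ K * (N : Set G) = Set.univ := by
  obtain ⟨K, hK, hKN⟩ := hN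
  refine ⟨K, hK, ?_⟩
  rw [Subgroup.set_mul_normal_comm]
  simpa using congrArg (·⁻¹) hKN

variable [TopologicalSpace X] [CompactSpace X] [T2Space X] [MulAction G X] [ContinuousSMul G X]
  [MulAction.IsMinimal G X]

theorem IsMinimalSet_s3.smul_eq_univ {A : Set X} (hA : IsMinimalSet_s3 N A) {K : Set G}
    (hK : IsCompact K) (hKN : K * (N : Set G) = Set.univ) : K • A = Set.univ := by
  obtain ⟨a, ha⟩ := hA.nonempty
  have hclosed : IsClosed (K • A) := (hK.smul_set hA.isClosed.isCompact).isClosed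
  have horbit : MulAction.orbit G a ⊆ K • A := by
    rintro _ ⟨g, rfl⟩
    obtain ⟨k, hk, n, hn, rfl⟩ := Set.mem_mul.1 (hKN ▸ Set.mem_univ g)
    have hna : n • a ∈ A := hA.orbit_subset ha ⟨⟨n, hn⟩, rfl⟩
    simpa only [mul_smul] using Set.smul_mem_smul hk hna
  exact hclosed.closure_eq ▸ ((MulAction.dense_orbit G a).mono horbit).closure_eq

theorem isClosed_setOf_mem_closure_orbit [N.Normal] (hN : IsSyndetic (N : Set G)) :
    IsClosed {p : X × X | p.2 ∈ closure (MulAction.orbit N p.1)} := by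
  cases isEmpty_or_nonempty X
  · exact isClosed_discrete _
  obtain ⟨K, hK, hKN⟩ := hN.exists_isCompact_mul_eq_univ
  obtain ⟨A, hA⟩ := exists_isMinimalSet N X
  have hAcompact : IsCompact A := hA.isClosed.isCompact
  rw [hA.setOf_mem_closure_orbit (hA.smul_eq_univ hK hKN)]
  exact (hK.smul_set (hAcompact.prod hAcompact)).isClosed

end SyndeticNormalSubgroup

theorem statement3_general {G X : Type*} [Group G] [TopologicalSpace G] [TopologicalSpace X]
    [CompactSpace X] [T2Space X] [MulAction G X] [ContinuousSMul G X] [MulAction.IsMinimal G X]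
    (N : Subgroup G) [N.Normal] (hN : IsSyndetic (N : Set G)) :
    Continuous[_, .vietoris X] fun x : X ↦ closure (MulAction.orbit N x) :=
  continuous_vietoris_iff.2 ⟨upperHemicontinuous_of_isClosed_graph
    (isClosed_setOf_mem_closure_orbit hN), lowerHemicontinuous_closure_orbit_s3 N⟩

theorem subOrbit_coe_subgroup {G X : Type} [Group G] [MulAction G X] (H : Subgroup G) (x : X) :
    subOrbit (H : Set G) x = MulAction.orbit H x :=
  Set.image_eq_range _ _

/-- in a minimal flow, the orbit-closure map of a syndetic normal
subgroup `H` is continuous into the Vietoris hyperspace: along any convergent net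
`x_i → x`, (a) eventually `closure (H•x_i) ⊆ U` for each open `U ⊇ closure (H•x)`,
and (b) eventually `closure (H•x_i)` meets each open `U` meeting `closure (H•x)`. -/
theorem statement3 {G X : Type} [Group G] [TopologicalSpace G] [T2Space G]
    [ContinuousMul G] [UniformSpace X] [T2Space X] [LocallyCompactSpace X]
    [MulAction G X] [ContinuousSMul G X]
    (hLag : ∀ x : X, IsCompact (closure (MulAction.orbit G x)))
    (hmin : ∀ x : X, closure (MulAction.orbit G x) = Set.univ)
    (H : Subgroup G) (hnorm : H.Normal)
    (hsynd : ∃ K : Set G, IsCompact K ∧ K⁻¹ * (H : Set G) = Set.univ) :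
    ∀ (ι : Type) (le : ι → ι → Prop) (xs : ι → X) (x : X),
      DirIdx le → (∀ U ∈ 𝓝 x, ∃ i, ∀ j, le i j → xs j ∈ U) →
      (∀ U : Set X, IsOpen U → closure (subOrbit (H : Set G) x) ⊆ U →
        ∃ i, ∀ j, le i j → closure (subOrbit (H : Set G) (xs j)) ⊆ U) ∧
      (∀ U : Set X, IsOpen U → (U ∩ closure (subOrbit (H : Set G) x)).Nonempty →
        ∃ i, ∀ j, le i j → (closure (subOrbit (H : Set G) (xs j)) ∩ U).Nonempty) := by
  intro ι le xs x _ hxs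
  have : CompactSpace X := ⟨hmin x ▸ hLag x⟩
  have : MulAction.IsMinimal G X := ⟨fun y ↦ dense_iff_closure_eq.2 (hmin y)⟩
  simp only [subOrbit_coe_subgroup]
  exact exists_forall_of_continuous_vietoris (statement3_general H hsynd) hxs
end

section
/- Let (G,X) be a flow with X compact and not connected, and with G compactly generated. If (G,X) is distal, then (G,X) has a non-trivial equicontinuous factor: there exist a compact Hausdorff space Y that is not a singleton, a jointly continuous G-action on Y that is equicontinuous with respect to the unique uniformity of Y, and a continuous surjection π : X → Y with π(g•x) = g•π(x) for all g ∈ G and x ∈ X. -/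
open Pointwise Filter Topology

/-- A non-trivial equicontinuous factor of a `G`-flow on `X`: a compact Hausdorff
non-singleton space `Y` with a jointly continuous `G`-action that is equicontinuous
with respect to the unique uniformity of `Y` (whose entourages are the neighborhoods
of the diagonal), together with a continuous equivariant surjection `X → Y`. -/
structure NontrivialEquicontinuousFactor (G X : Type) [Group G] [TopologicalSpace G]
    [TopologicalSpace X] [MulAction G X] where
  Y : Type
  [tY : TopologicalSpace Y]
  [mY : MulAction G Y]
  compactY : CompactSpace Y
  t2Y : T2Space Y
  contSMulY : ContinuousSMul G Y
  nontrivialY : Nontrivial Y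
  π : X → Y
  contπ : Continuous π
  surjπ : Function.Surjective π
  equivar : ∀ (g : G) (x : X), π (g • x) = g • π x
  equicont : ∀ (y : Y) (ε : Set (Y × Y)), ε ∈ 𝓝ˢ (Set.diagonal Y) →
    ∃ U ∈ 𝓝 y, ∀ z ∈ U, ∀ g : G, (g • z, g • y) ∈ ε

/-!
Choose a clopen set `A` that is neither empty nor everything, and identify two points of `X` when
every group element carries both or neither of them into `A`. If this invariant relation is open,
the quotient is a finite discrete factor, hence equicontinuous.

A pair is unrelated exactly when it lies in the saturation `G • V` of a clopen set `V ⊆ X × X`, so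
it is enough that `G • V` is closed. In a distal flow every element of the Ellis semigroup is
injective, which forces the idempotents to be trivial and makes every orbit closure in `X × X`
minimal. Let `D` be a symmetric generating set containing `1` and suppose that the sets `D ^ n • V`
increase forever. Then for each `n` some point of `V` has in its orbit a point outside `D ^ n • V`,
reached by an element of `D ^ (n + 1)`. By compactness one point `x ∈ V` serves for all `n`, and
its orbit closure contains a point `y` outside `G • V`. By minimality the orbit of `y` accumulates
at `x`, so it enters the open set `V`, which is absurd. Hence `G • V = D ^ n • V` for some `n`, and
compactness of the generating set makes this closed.
-/

open MulAction Set

section Distal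

variable (G X : Type*) [Group G] [TopologicalSpace X] [MulAction G X]

/-- The flow is distal: the orbit closure of a pair of distinct points in `X × X` does not meet
the diagonal. -/
def IsDistal : Prop :=
  ∀ x y : X, x ≠ y → Disjoint (closure (orbit G (x, y))) (diagonal X)

/-- The flow is pointwise almost periodic: every orbit closure is minimal. Minimality is encoded
as symmetry of the relation `y ∈ closure (orbit G x)`. -/
def IsPointwiseAlmostPeriodic : Prop :=
  ∀ x y : X, y ∈ closure (orbit G x) → x ∈ closure (orbit G y)

/-- The Ellis (enveloping) semigroup of the flow: the pointwise closure in `X → X` of the set of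
translations. It is kept as a set, closed under composition by `comp_mem_ellisSemigroup`. -/
def ellisSemigroup : Set (X → X) :=
  closure (range fun (g : G) (x : X) => g • x)

variable {G X}

theorem map_mem_closure_orbit {f : X → X} (hf : f ∈ ellisSemigroup G X) (p : X × X) :
    Prod.map f f p ∈ closure (orbit G p) := by
  have hcont : Continuous fun f : X → X => Prod.map f f p :=
    (continuous_apply p.1).prodMk (continuous_apply p.2)
  refine map_mem_closure (f := fun f : X → X => Prod.map f f p) hcont hf ?_
  rintro _ ⟨g, rfl⟩
  exact mem_orbit p g

theorem IsDistal.injective_of_mem_ellisSemigroup (hdistal : IsDistal G X) {f : X → X}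
    (hf : f ∈ ellisSemigroup G X) : Function.Injective f := by
  intro x y hxy
  by_contra hne
  exact disjoint_left.1 (hdistal x y hne) (map_mem_closure_orbit hf (x, y)) hxy

theorem comp_mem_ellisSemigroup [ContinuousConstSMul G X] {f h : X → X}
    (hf : f ∈ ellisSemigroup G X) (hh : h ∈ ellisSemigroup G X) : f ∘ h ∈ ellisSemigroup G X := by
  have translate_mem (g : G) : (fun x => g • h x) ∈ ellisSemigroup G X := by
    have hcont : Continuous fun (k : X → X) (x : X) => g • k x :=
      continuous_pi fun x => (continuous_apply x).const_smul g
    refine map_mem_closure hcont hh ?_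
    rintro _ ⟨k, rfl⟩
    exact ⟨g * k, funext fun x => mul_smul g k x⟩
  have hcont : Continuous fun k : X → X => k ∘ h := continuous_pi fun x => continuous_apply (h x)
  have hsubset : (range fun (g : G) (x : X) => g • x) ⊆ (· ∘ h) ⁻¹' ellisSemigroup G X := by
    rintro _ ⟨g, rfl⟩
    exact translate_mem g
  exact closure_minimal hsubset (isClosed_closure.preimage hcont) hf

variable [CompactSpace X] [T2Space X]

theorem closure_orbit_subset_image_ellisSemigroup (p : X × X) :
    closure (orbit G p) ⊆ (fun f : X → X => Prod.map f f p) '' ellisSemigroup G X := by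
  have hcont : Continuous fun f : X → X => Prod.map f f p :=
    (continuous_apply p.1).prodMk (continuous_apply p.2)
  refine closure_minimal ?_ (isClosed_closure.isCompact.image hcont).isClosed
  rintro _ ⟨g, rfl⟩
  exact ⟨fun x => g • x, subset_closure ⟨g, rfl⟩, rfl⟩

theorem exists_isIdempotent_comp_mem_ellisSemigroup [ContinuousConstSMul G X] {s : X → X}
    (hs : s ∈ ellisSemigroup G X) :
    ∃ t ∈ ellisSemigroup G X, (t ∘ s) ∘ (t ∘ s) = t ∘ s := by
  let : TopologicalSpace (Function.End X) := Pi.topologicalSpace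
  have : T2Space (Function.End X) := inferInstanceAs (T2Space (X → X))
  have continuous_comp_right (r : X → X) : Continuous fun f : X → X => f ∘ r :=
    continuous_pi fun x => continuous_apply (r x)
  obtain ⟨_, ⟨t, ht, rfl⟩, hidem⟩ := exists_idempotent_in_compact_subsemigroup
    (M := Function.End X) continuous_comp_right ((· ∘ s) '' ellisSemigroup G X) ⟨_, s, hs, rfl⟩
    (isClosed_closure.isCompact.image (continuous_comp_right s)) (by
      rintro _ ⟨f, hf, rfl⟩ _ ⟨h, hh, rfl⟩
      exact ⟨f ∘ s ∘ h, comp_mem_ellisSemigroup hf (comp_mem_ellisSemigroup hs hh), rfl⟩)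
  exact ⟨t, ht, hidem⟩

theorem IsDistal.exists_leftInverse_mem_ellisSemigroup [ContinuousConstSMul G X]
    (hdistal : IsDistal G X) {s : X → X} (hs : s ∈ ellisSemigroup G X) :
    ∃ t ∈ ellisSemigroup G X, Function.LeftInverse t s := by
  obtain ⟨t, ht, hidem⟩ := exists_isIdempotent_comp_mem_ellisSemigroup hs
  have hinj : Function.Injective (t ∘ s) :=
    hdistal.injective_of_mem_ellisSemigroup (comp_mem_ellisSemigroup ht hs)
  exact ⟨t, ht, fun x => hinj (congrFun hidem x)⟩

theorem IsDistal.isPointwiseAlmostPeriodic_prod [ContinuousConstSMul G X]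
    (hdistal : IsDistal G X) : IsPointwiseAlmostPeriodic G (X × X) := by
  intro p q hq
  obtain ⟨s, hs, rfl⟩ := closure_orbit_subset_image_ellisSemigroup p hq
  obtain ⟨t, ht, hts⟩ := hdistal.exists_leftInverse_mem_ellisSemigroup hs
  simpa only [Prod.map_map, hts.comp_eq_id, Prod.map_id, id] using
    map_mem_closure_orbit ht (Prod.map s s p)

end Distal

section Saturation

variable {G X : Type*} [Group G] [MulAction G X] {D : Set G}

theorem inv_smul_compl_smul_subset (D : Set G) (T : Set X) : D⁻¹ • (D • T)ᶜ ⊆ Tᶜ := by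
  rintro _ ⟨d, hd, x, hx, rfl⟩ hdx
  exact hx ⟨d⁻¹, hd, d • x, hdx, inv_smul_smul d x⟩

theorem univ_smul_subset_of_smul_subset (hDinv : D⁻¹ = D) (hDgen : Subgroup.closure D = ⊤)
    {W : Set X} (hW : D • W ⊆ W) : (univ : Set G) • W ⊆ W := by
  have hstab : D ⊆ stabilizer G W := fun d hd => mem_stabilizer_set.2 fun x =>
    ⟨fun hx => by
      simpa only [inv_smul_smul] using
        hW (smul_mem_smul (hDinv ▸ Set.inv_mem_inv.2 hd : d⁻¹ ∈ D) hx),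
      fun hx => hW (smul_mem_smul hd hx)⟩
  have htop : stabilizer G W = ⊤ := top_le_iff.1 (hDgen ▸ (Subgroup.closure_le _).2 hstab)
  rintro _ ⟨g, -, x, hx, rfl⟩
  exact (mem_stabilizer_set.1 (htop ▸ Subgroup.mem_top g) x).2 hx

theorem univ_smul_eq_iUnion_pow_smul (hDinv : D⁻¹ = D) (hDgen : Subgroup.closure D = ⊤)
    (V : Set X) : (univ : Set G) • V = ⋃ n : ℕ, D ^ n • V := by
  refine Subset.antisymm ?_ (iUnion_subset fun n => smul_subset_smul_right (subset_univ _))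
  have hV : V ⊆ ⋃ n : ℕ, D ^ n • V := subset_iUnion_of_subset 0 (by rw [pow_zero, one_smul])
  have hstep : D • (⋃ n : ℕ, D ^ n • V) ⊆ ⋃ n : ℕ, D ^ n • V := by
    rw [smul_iUnion]
    refine iUnion_subset fun n => subset_iUnion_of_subset (n + 1) ?_
    rw [pow_succ', mul_smul]
  exact (smul_subset_smul_left hV).trans (univ_smul_subset_of_smul_subset hDinv hDgen hstep)

theorem subset_smul_of_one_mem (hD1 : 1 ∈ D) (V : Set X) : V ⊆ D • V := fun x hx => by
  simpa only [one_smul] using smul_mem_smul hD1 hx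

theorem univ_smul_eq_pow_smul_of_pow_succ_smul_subset (hD1 : 1 ∈ D) (hDinv : D⁻¹ = D)
    (hDgen : Subgroup.closure D = ⊤) {V : Set X} {n : ℕ}
    (hn : D ^ (n + 1) • V ⊆ D ^ n • V) : (univ : Set G) • V = D ^ n • V := by
  refine Subset.antisymm ?_ (smul_subset_smul_right (subset_univ _))
  have hinvariant : (univ : Set G) • D ^ n • V ⊆ D ^ n • V :=
    univ_smul_subset_of_smul_subset hDinv hDgen (by rwa [smul_smul, ← pow_succ'])
  exact (smul_subset_smul_left (subset_smul_of_one_mem (Set.one_mem_pow hD1) V)).trans hinvariant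

/-- The part of `V` that `D ^ (n + 1)` reaches from outside `D ^ n • V`. For symmetric `D`
containing `1` it is empty exactly when the increasing sequence `D ^ n • V` stops growing at
stage `n`. -/
def escapeSet (D : Set G) (V : Set X) (n : ℕ) : Set X :=
  V ∩ D ^ (n + 1) • (D ^ n • V)ᶜ

theorem escapeSet_succ_subset (hDinv : D⁻¹ = D) (V : Set X) (n : ℕ) :
    escapeSet D V (n + 1) ⊆ escapeSet D V n := by
  refine inter_subset_inter_right V ?_
  have hstep : D • (D • D ^ n • V)ᶜ ⊆ (D ^ n • V)ᶜ := by
    simpa only [hDinv] using inv_smul_compl_smul_subset D (D ^ n • V)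
  calc D ^ (n + 1 + 1) • (D ^ (n + 1) • V)ᶜ
      = D ^ (n + 1) • D • (D • D ^ n • V)ᶜ := by
        rw [pow_succ D (n + 1), mul_smul, smul_smul D (D ^ n) V, ← pow_succ']
    _ ⊆ D ^ (n + 1) • (D ^ n • V)ᶜ := smul_subset_smul_left hstep

theorem escapeSet_nonempty (hDinv : D⁻¹ = D) {V : Set X} {n : ℕ}
    (hn : ¬D ^ (n + 1) • V ⊆ D ^ n • V) : (escapeSet D V n).Nonempty := by
  obtain ⟨_, ⟨g, hg, x, hx, rfl⟩, hgx⟩ := not_subset.1 hn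
  have hginv : g⁻¹ ∈ D ^ (n + 1) := by rwa [← Set.mem_inv, ← inv_pow, hDinv]
  exact ⟨x, hx, g⁻¹, hginv, g • x, hgx, inv_smul_smul g x⟩

theorem orbit_inter_nonempty_of_mem_smul {x : X} {S : Set X} (hx : x ∈ D • S) :
    (orbit G x ∩ S).Nonempty := by
  obtain ⟨g, -, y, hy, rfl⟩ := hx
  exact ⟨y, mem_orbit_symm.1 (mem_orbit y g), hy⟩

variable [TopologicalSpace X]

theorem isClosed_pow_smul (hDclosed : ∀ S : Set X, IsClosed S → IsClosed (D • S)) {S : Set X}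
    (hS : IsClosed S) (n : ℕ) : IsClosed (D ^ n • S) := by
  induction n with
  | zero => rwa [pow_zero, one_smul]
  | succ n ih =>
    rw [pow_succ', mul_smul]
    exact hDclosed _ ih

theorem IsPointwiseAlmostPeriodic.closure_orbit_subset_univ_smul
    (hX : IsPointwiseAlmostPeriodic G X) {V : Set X} (hV : IsOpen V) {x : X} (hx : x ∈ V) :
    closure (orbit G x) ⊆ (univ : Set G) • V := by
  intro y hy
  obtain ⟨_, hgy, g, rfl⟩ := mem_closure_iff.1 (hX x y hy) V hV hx
  exact ⟨g⁻¹, mem_univ _, g • y, hgy, inv_smul_smul g y⟩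

variable [CompactSpace X] [ContinuousConstSMul G X]

theorem IsPointwiseAlmostPeriodic.iInter_escapeSet_eq_empty
    (hX : IsPointwiseAlmostPeriodic G X) (hD1 : 1 ∈ D) (hDinv : D⁻¹ = D)
    (hDgen : Subgroup.closure D = ⊤) {V : Set X} (hV : IsOpen V) :
    ⋂ n, escapeSet D V n = ∅ := by
  refine eq_empty_of_forall_notMem fun x hx => ?_
  rw [mem_iInter] at hx
  have hanti (n : ℕ) : (D ^ (n + 1) • V)ᶜ ⊆ (D ^ n • V)ᶜ := compl_subset_compl.2 (by
    rw [pow_succ', mul_smul]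
    exact subset_smul_of_one_mem hD1 (D ^ n • V))
  have hclosed (n : ℕ) : IsClosed (closure (orbit G x) ∩ (D ^ n • V)ᶜ) :=
    isClosed_closure.inter hV.smul_left.isClosed_compl
  obtain ⟨y, hy⟩ := IsCompact.nonempty_iInter_of_sequence_nonempty_isCompact_isClosed
    (fun n => closure (orbit G x) ∩ (D ^ n • V)ᶜ)
    (fun n => inter_subset_inter_right _ (hanti n))
    (fun n => (orbit_inter_nonempty_of_mem_smul (hx n).2).mono
      (inter_subset_inter_left _ subset_closure))
    (hclosed 0).isCompact hclosed
  rw [mem_iInter] at hy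
  have hyV : y ∈ (univ : Set G) • V := hX.closure_orbit_subset_univ_smul hV (hx 0).1 (hy 0).1
  rw [univ_smul_eq_iUnion_pow_smul hDinv hDgen, mem_iUnion] at hyV
  obtain ⟨n, hyn⟩ := hyV
  exact (hy n).2 hyn

theorem IsPointwiseAlmostPeriodic.exists_pow_succ_smul_subset
    (hX : IsPointwiseAlmostPeriodic G X) (hD1 : 1 ∈ D) (hDinv : D⁻¹ = D)
    (hDgen : Subgroup.closure D = ⊤) (hDclosed : ∀ S : Set X, IsClosed S → IsClosed (D • S))
    {V : Set X} (hV : IsClopen V) : ∃ n : ℕ, D ^ (n + 1) • V ⊆ D ^ n • V := by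
  by_contra! hn
  have hclosed (n : ℕ) : IsClosed (escapeSet D V n) :=
    hV.isClosed.inter (isClosed_pow_smul hDclosed hV.isOpen.smul_left.isClosed_compl (n + 1))
  have hnonempty : (⋂ n, escapeSet D V n).Nonempty :=
    IsCompact.nonempty_iInter_of_sequence_nonempty_isCompact_isClosed (escapeSet D V)
      (escapeSet_succ_subset hDinv V) (fun n => escapeSet_nonempty hDinv (hn n))
      (hclosed 0).isCompact hclosed
  exact hnonempty.ne_empty (hX.iInter_escapeSet_eq_empty hD1 hDinv hDgen hV.isOpen)

theorem IsPointwiseAlmostPeriodic.isClosed_univ_smul (hX : IsPointwiseAlmostPeriodic G X)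
    (hD1 : 1 ∈ D) (hDinv : D⁻¹ = D) (hDgen : Subgroup.closure D = ⊤)
    (hDclosed : ∀ S : Set X, IsClosed S → IsClosed (D • S)) {V : Set X} (hV : IsClopen V) :
    IsClosed ((univ : Set G) • V) := by
  obtain ⟨n, hn⟩ := hX.exists_pow_succ_smul_subset hD1 hDinv hDgen hDclosed hV
  rw [univ_smul_eq_pow_smul_of_pow_succ_smul_subset hD1 hDinv hDgen hn]
  exact isClosed_pow_smul hDclosed hV.isClosed n

end Saturation

section CompactlyGenerated

variable {G X : Type*} [Group G] [TopologicalSpace G] [TopologicalSpace X] [MulAction G X]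
  [ContinuousSMul G X] {Γ : Set G} {S : Set X}

theorem isClosed_inv_smul_of_isCompact (hΓ : IsCompact Γ) (hS : IsClosed S) :
    IsClosed (Γ⁻¹ • S) := by
  have hcompl : (Γ⁻¹ • S)ᶜ = {x | ∀ g ∈ Γ, g • x ∈ Sᶜ} := by
    ext x
    simp only [mem_compl_iff, mem_ofPred_eq, Set.mem_smul, not_exists, not_and]
    exact ⟨fun h g hg hgx => h g⁻¹ (Set.inv_mem_inv.2 hg) _ hgx (inv_smul_smul g x),
      fun h g hg y hy hgy => h g⁻¹ hg (by rwa [← hgy, inv_smul_smul])⟩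
  refine isOpen_compl_iff.1 (hcompl ▸ isOpen_iff_eventually.2 fun x hx => ?_)
  refine hΓ.eventually_forall_of_forall_eventually fun g hg => ?_
  have hcont : Continuous fun q : X × G => q.2 • q.1 := continuous_snd.smul continuous_fst
  exact hcont.continuousAt.eventually_mem (hS.isOpen_compl.mem_nhds (hx g hg))

theorem isClosed_smul_of_isCompact {M : Type*} [TopologicalSpace M] [SMul M X]
    [ContinuousSMul M X] [CompactSpace X] [T2Space X] {K : Set M} (hK : IsCompact K)
    (hS : IsClosed S) : IsClosed (K • S) := by
  rw [← image_smul_prod]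
  exact ((hK.prod hS.isCompact).image continuous_smul).isClosed

theorem IsPointwiseAlmostPeriodic.isClosed_univ_smul_of_isCompact [CompactSpace X] [T2Space X]
    (hX : IsPointwiseAlmostPeriodic G X) (hΓ : IsCompact Γ) (hΓgen : Subgroup.closure Γ = ⊤)
    {V : Set X} (hV : IsClopen V) : IsClosed ((univ : Set G) • V) := by
  refine hX.isClosed_univ_smul (D := {1} ∪ (Γ ∪ Γ⁻¹)) (Or.inl rfl) ?_ ?_ (fun S hS => ?_) hV
  · rw [union_inv, union_inv, inv_inv, inv_singleton, inv_one, union_comm Γ⁻¹]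
  · exact top_le_iff.1 (hΓgen ▸ Subgroup.closure_mono (subset_union_left.trans subset_union_right))
  · rw [union_smul, union_smul, singleton_smul, one_smul]
    exact hS.union ((isClosed_smul_of_isCompact hΓ hS).union (isClosed_inv_smul_of_isCompact hΓ hS))

end CompactlyGenerated

section Itinerary

variable (G : Type*) {X : Type*} [Group G] [MulAction G X] (A : Set X)

/-- The itinerary of `x` through `A`: the group elements that carry `x` into `A`. -/
def itinerary (x : X) : Set G :=
  {g | g • x ∈ A}

/-- The equivalence relation identifying points with the same itinerary through `A`. -/
def itinerarySetoid : Setoid X :=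
  Setoid.ker (itinerary G A)

variable {G A}

theorem itinerarySetoid_iff {x y : X} :
    itinerarySetoid G A x y ↔ ∀ g : G, g • x ∈ A ↔ g • y ∈ A :=
  Set.ext_iff

theorem itinerarySetoid_smul (g : G) {x y : X} (hxy : itinerarySetoid G A x y) :
    itinerarySetoid G A (g • x) (g • y) :=
  itinerarySetoid_iff.2 fun h => by
    simpa only [mul_smul] using itinerarySetoid_iff.1 hxy (h * g)

theorem itinerarySetoid_ne_top (hA : A.Nonempty) (hAc : Aᶜ.Nonempty) :
    itinerarySetoid G A ≠ ⊤ := by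
  obtain ⟨a, ha⟩ := hA
  obtain ⟨b, hb⟩ := hAc
  intro htop
  have hab : itinerarySetoid G A a b := htop ▸ trivial
  exact hb (by simpa only [one_smul] using (itinerarySetoid_iff.1 hab 1).1 (by rwa [one_smul]))

variable (A) in
/-- The pairs of points that are separated by `A`. -/
def separatedPairs : Set (X × X) :=
  A ×ˢ Aᶜ ∪ Aᶜ ×ˢ A

theorem notMem_separatedPairs_iff {p : X × X} : p ∉ separatedPairs A ↔ (p.1 ∈ A ↔ p.2 ∈ A) := by
  simp only [separatedPairs, mem_union, mem_prod, mem_compl_iff]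
  tauto

theorem itinerarySetoid_iff_notMem_univ_smul {x y : X} :
    itinerarySetoid G A x y ↔ (x, y) ∉ (univ : Set G) • separatedPairs A := by
  rw [itinerarySetoid_iff]
  constructor
  · rintro hxy ⟨g, -, p, hp, hgp⟩
    have hp' : g⁻¹ • (x, y) = p := inv_smul_eq_iff.2 hgp.symm
    exact notMem_separatedPairs_iff.2 (hxy g⁻¹) (hp' ▸ hp)
  · intro hxy g
    refine notMem_separatedPairs_iff (p := g • (x, y)).1 fun hg => hxy ?_
    exact ⟨g⁻¹, mem_univ _, g • (x, y), hg, inv_smul_smul g (x, y)⟩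

theorem IsDistal.isOpen_itinerarySetoid [TopologicalSpace G] [TopologicalSpace X] [CompactSpace X]
    [T2Space X] [ContinuousSMul G X] (hdistal : IsDistal G X) {Γ : Set G} (hΓ : IsCompact Γ)
    (hΓgen : Subgroup.closure Γ = ⊤) (hA : IsClopen A) (x : X) :
    IsOpen (Set.ofPred (itinerarySetoid G A x)) := by
  have hseparated : IsClopen (separatedPairs A) :=
    (hA.prod hA.compl).union (hA.compl.prod hA)
  have hclosed : IsClosed ((univ : Set G) • separatedPairs A) :=
    hdistal.isPointwiseAlmostPeriodic_prod.isClosed_univ_smul_of_isCompact hΓ hΓgen hseparated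
  have hclass : Set.ofPred (itinerarySetoid G A x) =
      Prod.mk x ⁻¹' ((univ : Set G) • separatedPairs A)ᶜ :=
    Set.ext fun _ => itinerarySetoid_iff_notMem_univ_smul
  rw [hclass]
  exact hclosed.isOpen_compl.preimage (Continuous.prodMk_right x)

end Itinerary

theorem continuousSMul_of_discreteTopology {G X Y : Type*} [TopologicalSpace G]
    [TopologicalSpace X] [TopologicalSpace Y] [DiscreteTopology Y] [SMul G X] [SMul G Y]
    [ContinuousSMul G X] {π : X → Y} (hcont : Continuous π) (hsurj : Function.Surjective π)
    (hsmul : ∀ (g : G) (x : X), π (g • x) = g • π x) : ContinuousSMul G Y := by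
  refine ⟨continuous_prod_of_discrete_right.2 fun y => ?_⟩
  obtain ⟨x, rfl⟩ := hsurj y
  have horbit : Continuous fun g : G => g • x := continuous_id.smul continuous_const
  simpa only [← hsmul, Function.comp_def] using hcont.comp horbit

section DiscreteFactor

variable {G X : Type} [Group G] [TopologicalSpace G] [TopologicalSpace X] [CompactSpace X]
  [MulAction G X] [ContinuousSMul G X]

/-- A nontrivial discrete factor, as an equicontinuous factor: over a discrete space every point
is a neighborhood of itself, so equicontinuity is automatic. -/
def NontrivialEquicontinuousFactor.ofDiscrete {Y : Type} [TopologicalSpace Y] [DiscreteTopology Y]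
    [Nontrivial Y] [MulAction G Y] {π : X → Y} (hcont : Continuous π)
    (hsurj : Function.Surjective π) (hsmul : ∀ (g : G) (x : X), π (g • x) = g • π x) :
    NontrivialEquicontinuousFactor G X where
  Y := Y
  compactY := hsurj.compactSpace hcont
  t2Y := inferInstance
  contSMulY := continuousSMul_of_discreteTopology hcont hsurj hsmul
  nontrivialY := inferInstance
  π := π
  contπ := hcont
  surjπ := hsurj
  equivar := hsmul
  equicont y ε hε := ⟨{y}, (isOpen_discrete _).mem_nhds rfl, by
    rintro _ rfl g
    exact subset_of_mem_nhdsSet hε rfl⟩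

theorem NontrivialEquicontinuousFactor.exists_finite_of_discreteQuotient (S : DiscreteQuotient X)
    (hsmul : ∀ (g : G) {x y : X}, S.toSetoid x y → S.toSetoid (g • x) (g • y))
    (hne : S.toSetoid ≠ ⊤) : ∃ F : NontrivialEquicontinuousFactor G X, Finite F.Y := by
  let c : SMulCon G X := { S.toSetoid with smul := hsmul }
  let : MulAction G S := inferInstanceAs (MulAction G c.Quotient)
  have : Nontrivial S := not_subsingleton_iff_nontrivial.1 (mt Quotient.subsingleton_iff.1 hne)
  exact ⟨ofDiscrete S.proj_continuous S.proj_surjective fun _ _ => rfl, inferInstanceAs (Finite S)⟩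

end DiscreteFactor

theorem exists_isClopen_nonempty_of_not_preconnectedSpace {X : Type*} [TopologicalSpace X]
    (hX : ¬PreconnectedSpace X) : ∃ A : Set X, IsClopen A ∧ A.Nonempty ∧ Aᶜ.Nonempty := by
  simpa only [preconnectedSpace_iff_clopen, not_forall, not_or, ← nonempty_iff_ne_empty,
    ← nonempty_compl, exists_prop] using hX

theorem closure_eq_top_of_forall_exists_mem_pow {G : Type*} [Group G] {Γ : Set G}
    (hΓ : ∀ g : G, ∃ r : ℕ, g ∈ Γ ^ r) : Subgroup.closure Γ = ⊤ := by
  refine (Subgroup.eq_top_iff' _).2 fun g => ?_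
  obtain ⟨r, hr⟩ := hΓ g
  exact Subgroup.closure_pow_le (Subgroup.subset_closure hr)

theorem statement5_general {G X : Type} [Group G] [TopologicalSpace G] [TopologicalSpace X]
    [T2Space X] [CompactSpace X] [MulAction G X] [ContinuousSMul G X]
    (hnc : ¬PreconnectedSpace X) {Γ : Set G} (hΓ : IsCompact Γ)
    (hΓgen : Subgroup.closure Γ = ⊤) (hdistal : IsDistal G X) :
    ∃ F : NontrivialEquicontinuousFactor G X, Finite F.Y := by
  obtain ⟨A, hA, hAne, hAcne⟩ := exists_isClopen_nonempty_of_not_preconnectedSpace hnc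
  exact NontrivialEquicontinuousFactor.exists_finite_of_discreteQuotient
    ⟨itinerarySetoid G A, hdistal.isOpen_itinerarySetoid hΓ hΓgen hA⟩ itinerarySetoid_smul
    (itinerarySetoid_ne_top hAne hAcne)

/-- a distal compact non-connected flow with compactly generated phase
group has a non-trivial equicontinuous factor. -/
theorem statement5 {G X : Type} [Group G] [TopologicalSpace G] [T2Space G]
    [ContinuousMul G] [UniformSpace X] [T2Space X] [CompactSpace X]
    [MulAction G X] [ContinuousSMul G X]
    (hnc : ¬ PreconnectedSpace X)
    (Γ : Set G) (hΓc : IsCompact Γ) (hΓ1 : (1 : G) ∈ Γ) (hΓinv : Γ⁻¹ = Γ)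
    (hΓgen : ∀ g : G, ∃ r : ℕ, 1 ≤ r ∧ g ∈ Γ ^ r)
    (hdistal : ∀ x y : X, x ≠ y →
      closure (Set.range fun g : G => (g • x, g • y)) ∩ Set.diagonal X = ∅) :
    Nonempty (NontrivialEquicontinuousFactor G X) := by
  have hclosure : Subgroup.closure Γ = ⊤ :=
    closure_eq_top_of_forall_exists_mem_pow fun g => (hΓgen g).imp fun _ => And.right
  obtain ⟨F, -⟩ := statement5_general hnc hΓc hclosure
    fun x y hxy => disjoint_iff_inter_eq_empty.2 (hdistal x y hxy)
  exact ⟨F⟩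
end

section
/- Let (G,X) be a flow with X a metric space. Suppose every point of X is regularly almost periodic with respect to the discrete topology on G, i.e. for every x ∈ X and every neighborhood U of x there is a finite-index normal subgroup H of G with H•x ⊆ U, and suppose G has only countably many finite-index normal subgroups. Then the set of points at which (G,X) is equicontinuous is residual (comeager) in X. -/
open Pointwise Filter Topology Uniformity

/-!
Fix `x` with compact orbit closure `K`. By regular almost periodicity the closures of `H`-orbits
partition `K` for every normal subgroup `H` of finite index; being finitely many closed translates
of one another, they are open in `K`. Finitely many small ones therefore cover `K`, and
intersecting the corresponding subgroups yields a single `H` such that `g ↦ g • x` is nearly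
constant on each coset of `H`. For a fixed entourage and a fixed `H` the points `x` with this
property form a closed set. There are countably many `H`, so by Baire the interiors of these
closed sets cover a residual set, and near an interior point equicontinuity of `G` reduces to
continuity of the finitely many coset representatives of `H`.
-/

section Orbit

theorem closure_orbit_subset_of_mem_closure {M X : Type*} [Monoid M] [MulAction M X]
    [TopologicalSpace X] [ContinuousConstSMul M X] {x y : X}
    (hy : y ∈ closure (MulAction.orbit M x)) :
    closure (MulAction.orbit M y) ⊆ closure (MulAction.orbit M x) := by
  refine closure_minimal ?_ isClosed_closure
  rintro _ ⟨g, rfl⟩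
  exact smul_closure_orbit_subset g x (Set.smul_mem_smul_set hy)

variable {G X : Type*} [Group G] [MulAction G X]

theorem orbit_eq_iUnion_out_smul_orbit (H : Subgroup G) (x : X) :
    MulAction.orbit G x = ⋃ q : G ⧸ H, q.out • MulAction.orbit H x := by
  refine Set.Subset.antisymm ?_ (Set.iUnion_subset fun q ↦ ?_)
  · rintro _ ⟨g, rfl⟩
    have hg : (g : G ⧸ H).out⁻¹ * g ∈ H := QuotientGroup.eq.1 (QuotientGroup.out_eq' _)
    refine Set.mem_iUnion.2 ⟨g, Set.mem_smul_set_iff_inv_smul_mem.2 ⟨⟨_, hg⟩, ?_⟩⟩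
    exact mul_smul _ _ _
  · rintro _ ⟨_, ⟨h, rfl⟩, rfl⟩
    exact ⟨q.out * h, mul_smul _ _ _⟩

variable [TopologicalSpace X] [ContinuousConstSMul G X]

instance continuousConstSMul_subgroup (H : Subgroup G) : ContinuousConstSMul H X :=
  ⟨fun h ↦ continuous_const_smul (h : G)⟩

theorem closure_orbit_eq_iUnion_out_smul (H : Subgroup G) [H.FiniteIndex] (x : X) :
    closure (MulAction.orbit G x) = ⋃ q : G ⧸ H, q.out • closure (MulAction.orbit H x) := by
  simp only [orbit_eq_iUnion_out_smul_orbit H x, closure_iUnion_of_finite, closure_smul]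

theorem smul_closure_orbit_eq_closure_orbit_smul (H : Subgroup G) [H.Normal] (g : G) (x : X) :
    g • closure (MulAction.orbit H x) = closure (MulAction.orbit H (g • x)) := by
  rw [← closure_smul, MulAction.smul_orbit_eq_orbit_smul]

end Orbit

/-- The point `x` is regularly almost periodic under `G` with the discrete topology: each
neighborhood of `x` contains the orbit of `x` under some normal subgroup of finite index. -/
def IsRegularlyAlmostPeriodicAt (G : Type*) {X : Type*} [Group G] [MulAction G X]
    [TopologicalSpace X] (x : X) : Prop :=
  ∀ U ∈ 𝓝 x, ∃ H : Subgroup G, H.Normal ∧ H.FiniteIndex ∧ ∀ h ∈ H, h • x ∈ U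

namespace IsRegularlyAlmostPeriodicAt

section Topological

variable {G X : Type*} [Group G] [MulAction G X] [TopologicalSpace X] {x : X}

theorem subgroup (hx : IsRegularlyAlmostPeriodicAt G x) (H : Subgroup G) :
    IsRegularlyAlmostPeriodicAt H x := by
  intro U hU
  obtain ⟨K, hK, _, hKU⟩ := hx U hU
  exact ⟨K.subgroupOf H, hK.subgroupOf H, inferInstance, fun h hh ↦ hKU h hh⟩

variable [RegularSpace X]

theorem exists_closure_orbit_subset (hx : IsRegularlyAlmostPeriodicAt G x) {U : Set X}
    (hU : U ∈ 𝓝 x) :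
    ∃ H : Subgroup G, H.Normal ∧ H.FiniteIndex ∧ closure (MulAction.orbit H x) ⊆ U := by
  obtain ⟨F, ⟨hF, hFclosed⟩, hFU⟩ := (closed_nhds_basis x).mem_iff.1 hU
  obtain ⟨H, hH, hHfin, hHF⟩ := hx F hF
  refine ⟨H, hH, hHfin, (closure_minimal ?_ hFclosed).trans hFU⟩
  rintro _ ⟨h, rfl⟩
  exact hHF h h.2

variable [ContinuousConstSMul G X]

theorem mem_closure_orbit_symm (hx : IsRegularlyAlmostPeriodicAt G x) {y : X}
    (hy : y ∈ closure (MulAction.orbit G x)) : x ∈ closure (MulAction.orbit G y) := by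
  refine mem_closure_iff_nhds.2 fun U hU ↦ ?_
  obtain ⟨H, -, _, hHU⟩ := hx.exists_closure_orbit_subset hU
  rw [closure_orbit_eq_iUnion_out_smul H x] at hy
  obtain ⟨q, hq⟩ := Set.mem_iUnion.1 hy
  exact ⟨q.out⁻¹ • y, hHU (Set.mem_smul_set_iff_inv_smul_mem.1 hq), MulAction.mem_orbit y _⟩

theorem closure_orbit_eq (hx : IsRegularlyAlmostPeriodicAt G x) {y : X}
    (hy : y ∈ closure (MulAction.orbit G x)) :
    closure (MulAction.orbit G y) = closure (MulAction.orbit G x) :=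
  (closure_orbit_subset_of_mem_closure hy).antisymm
    (closure_orbit_subset_of_mem_closure (hx.mem_closure_orbit_symm hy))

theorem smul_closure_orbit_eq_of_mem (hx : IsRegularlyAlmostPeriodicAt G x) {H : Subgroup G}
    [H.Normal] {g : G} (hxg : x ∈ g • closure (MulAction.orbit H x)) :
    g • closure (MulAction.orbit H x) = closure (MulAction.orbit H x) := by
  have hinv : g⁻¹ • x ∈ closure (MulAction.orbit H x) := Set.mem_smul_set_iff_inv_smul_mem.1 hxg
  rw [← (hx.subgroup H).closure_orbit_eq hinv, smul_closure_orbit_eq_closure_orbit_smul,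
    smul_inv_smul, (hx.subgroup H).closure_orbit_eq hinv]

theorem closure_orbit_mem_nhdsWithin (hx : IsRegularlyAlmostPeriodicAt G x) (H : Subgroup G)
    [H.Normal] [H.FiniteIndex] :
    closure (MulAction.orbit H x) ∈ 𝓝[closure (MulAction.orbit G x)] x := by
  have translate_subset_near (q : G ⧸ H) : ∀ᶠ y in 𝓝 x,
      y ∈ q.out • closure (MulAction.orbit H x) → y ∈ closure (MulAction.orbit H x) := by
    by_cases hxq : x ∈ q.out • closure (MulAction.orbit H x)
    · exact .of_forall fun y hy ↦ hx.smul_closure_orbit_eq_of_mem hxq ▸ hy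
    · filter_upwards [(isClosed_closure.smul q.out).isOpen_compl.mem_nhds hxq] with y hy hyq
      exact absurd hyq hy
  refine mem_nhdsWithin_iff_eventually.2 ?_
  filter_upwards [eventually_all.2 translate_subset_near] with y hy hyx
  rw [closure_orbit_eq_iUnion_out_smul H x] at hyx
  obtain ⟨q, hyq⟩ := Set.mem_iUnion.1 hyx
  exact hy q hyq

end Topological

section Uniform

variable {G X : Type*} [Group G] [MulAction G X] [UniformSpace X] {x : X} {V : SetRel X X}

theorem exists_closure_orbit_prod_subset (hx : IsRegularlyAlmostPeriodicAt G x) (hV : V ∈ 𝓤 X) :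
    ∃ H : Subgroup G, H.Normal ∧ H.FiniteIndex ∧
      closure (MulAction.orbit H x) ×ˢ closure (MulAction.orbit H x) ⊆ V := by
  obtain ⟨U, hU, hUV⟩ := mem_prod_same_iff.1 (nhds_prod_eq (x := x) (y := x) ▸
    nhds_le_uniformity x hV)
  obtain ⟨H, hH, hHfin, hHU⟩ := hx.exists_closure_orbit_subset hU
  exact ⟨H, hH, hHfin, (Set.prod_mono hHU hHU).trans hUV⟩

variable [ContinuousConstSMul G X]

theorem exists_forall_mem_closure_orbit
    (hrap : ∀ y ∈ closure (MulAction.orbit G x), IsRegularlyAlmostPeriodicAt G y)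
    (hcompact : IsCompact (closure (MulAction.orbit G x))) (hV : V ∈ 𝓤 X) :
    ∃ H : Subgroup G, H.Normal ∧ H.FiniteIndex ∧
      ∀ y ∈ closure (MulAction.orbit G x), ∀ h ∈ H, (y, h • y) ∈ V := by
  have hx := hrap x (subset_closure (MulAction.mem_orbit_self x))
  choose! N hNnormal hNfin hNV using fun y hy ↦
    (hrap y hy).exists_closure_orbit_prod_subset hV
  obtain ⟨t, htK, hcover⟩ := hcompact.elim_nhdsWithin_subcover
    (fun y ↦ closure (MulAction.orbit (N y) y)) fun y hy ↦ by
      have := hNnormal y hy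
      have := hNfin y hy
      exact hx.closure_orbit_eq hy ▸ (hrap y hy).closure_orbit_mem_nhdsWithin (N y)
  refine ⟨⨅ z ∈ t, N z, ?_, Subgroup.finiteIndex_iInf' N fun z hz ↦ hNfin z (htK z hz), ?_⟩
  · exact Subgroup.normal_iInf_normal fun z ↦ Subgroup.normal_iInf_normal fun hz ↦
      hNnormal z (htK z hz)
  · intro y hy h hh
    obtain ⟨z, hz, hyz⟩ := Set.mem_iUnion₂.1 (hcover hy)
    have hhz : h ∈ N z := Subgroup.mem_iInf.1 (Subgroup.mem_iInf.1 hh z) hz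
    have hsmul : h • y ∈ closure (MulAction.orbit (N z) z) :=
      smul_closure_orbit_subset (⟨h, hhz⟩ : N z) z (Set.smul_mem_smul_set hyz)
    exact hNV z (htK z hz) ⟨hyz, hsmul⟩

end Uniform

end IsRegularlyAlmostPeriodicAt

section Cosets

open scoped SetRel

variable {G X : Type*} [Group G] [MulAction G X]

/-- The points `x` whose orbit map `g ↦ g • x` sends each left coset of `H` to a `V`-small set. -/
def smallOnCosets (H : Subgroup G) (V : SetRel X X) : Set X :=
  {x | ∀ g g' : G, (g : G ⧸ H) = g' → (g • x, g' • x) ∈ V}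

theorem isClosed_smallOnCosets [TopologicalSpace X] [ContinuousConstSMul G X] (H : Subgroup G)
    {V : SetRel X X} (hV : IsClosed V) : IsClosed (smallOnCosets H V) := by
  simp only [smallOnCosets, Set.ofPred_forall]
  exact isClosed_iInter fun g ↦ isClosed_iInter fun g' ↦ isClosed_iInter fun _ ↦
    hV.preimage (by fun_prop)

variable [UniformSpace X] [ContinuousConstSMul G X]

theorem exists_mem_smallOnCosets {x : X} {V : SetRel X X}
    (hrap : ∀ y ∈ closure (MulAction.orbit G x), IsRegularlyAlmostPeriodicAt G y)
    (hcompact : IsCompact (closure (MulAction.orbit G x))) (hV : V ∈ 𝓤 X) :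
    ∃ H : Subgroup G, H.Normal ∧ H.FiniteIndex ∧ x ∈ smallOnCosets H V := by
  obtain ⟨H, hH, hHfin, hHV⟩ :=
    IsRegularlyAlmostPeriodicAt.exists_forall_mem_closure_orbit hrap hcompact hV
  refine ⟨H, hH, hHfin, fun g g' hgg' ↦ ?_⟩
  have hdiv : g' * g⁻¹ ∈ H := hH.mem_comm (QuotientGroup.eq.1 hgg')
  have := hHV (g • x) (subset_closure (MulAction.mem_orbit x g)) _ hdiv
  rwa [smul_smul, inv_mul_cancel_right] at this

theorem eventually_forall_smul_mem_of_smallOnCosets_mem_nhds {H : Subgroup G} [H.FiniteIndex]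
    {x : X} {V : SetRel X X} (hV : V ∈ 𝓤 X) (hx : smallOnCosets H V ∈ 𝓝 x) :
    ∀ᶠ y in 𝓝 x, ∀ g : G, (g • x, g • y) ∈ V ○ (V ○ V) := by
  have near_on_representatives : ∀ᶠ y in 𝓝 x, ∀ q : G ⧸ H, (q.out • x, q.out • y) ∈ V :=
    eventually_all.2 fun q ↦
      (continuous_const_smul q.out).continuousAt (mem_nhds_left _ hV)
  filter_upwards [hx, near_on_representatives] with y hy hxy g
  have hout : (((g : G ⧸ H).out : G) : G ⧸ H) = g := QuotientGroup.out_eq' _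
  exact ⟨_, mem_of_mem_nhds hx g _ hout.symm, _, hxy g, hy _ g hout⟩

end Cosets

section Flow

open scoped SetRel

variable {G X : Type*} [Group G] [UniformSpace X] [BaireSpace X] [MulAction G X]
  [ContinuousConstSMul G X]

theorem eventually_residual_forall_smul_mem
    (hLag : ∀ x : X, IsCompact (closure (MulAction.orbit G x)))
    (hrap : ∀ x : X, IsRegularlyAlmostPeriodicAt G x)
    (hcount : {H : Subgroup G | H.Normal ∧ H.FiniteIndex}.Countable)
    {W : SetRel X X} (hW : W ∈ 𝓤 X) :
    ∀ᶠ x in residual X, ∀ᶠ y in 𝓝 x, ∀ g : G, (g • x, g • y) ∈ W := by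
  obtain ⟨V₀, hV₀, hV₀W⟩ := comp3_mem_uniformity hW
  obtain ⟨V, ⟨hV, hVclosed⟩, hVV₀⟩ := uniformity_hasBasis_closed.mem_iff.1 hV₀
  have hVW : V ○ (V ○ V) ⊆ W :=
    (SetRel.comp_subset_comp hVV₀ (SetRel.comp_subset_comp hVV₀ hVV₀)).trans hV₀W
  have cover : ⋃ H ∈ {H : Subgroup G | H.Normal ∧ H.FiniteIndex}, smallOnCosets H V =
      (Set.univ : Set X) := by
    refine Set.eq_univ_of_forall fun x ↦ ?_
    obtain ⟨H, hH, hHfin, hx⟩ := exists_mem_smallOnCosets (fun y _ ↦ hrap y) (hLag x) hV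
    exact Set.mem_biUnion ⟨hH, hHfin⟩ hx
  have dense_interiors := dense_biUnion_interior_of_closed
    (fun H _ ↦ isClosed_smallOnCosets H hVclosed) hcount cover
  filter_upwards [residual_of_dense_open
    (isOpen_biUnion fun _ _ ↦ isOpen_interior) dense_interiors] with x hx
  obtain ⟨H, ⟨-, _⟩, hxH⟩ := Set.mem_iUnion₂.1 hx
  filter_upwards [eventually_forall_smul_mem_of_smallOnCosets_mem_nhds hV
    (mem_interior_iff_mem_nhds.1 hxH)] with y hy g
  exact hVW (hy g)

theorem statement7_general [(𝓤 X).IsCountablyGenerated]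
    (hLag : ∀ x : X, IsCompact (closure (MulAction.orbit G x)))
    (hrap : ∀ x : X, IsRegularlyAlmostPeriodicAt G x)
    (hcount : {H : Subgroup G | H.Normal ∧ H.FiniteIndex}.Countable) :
    {x : X | EquicontinuousAt (fun (g : G) (y : X) ↦ g • y) x} ∈ residual X := by
  obtain ⟨V, hV⟩ := (𝓤 X).exists_antitone_basis
  filter_upwards [eventually_countable_forall.2 fun n ↦
    eventually_residual_forall_smul_mem hLag hrap hcount (hV.mem n)] with x hx W hW
  obtain ⟨n, hnW⟩ := hV.mem_iff.1 hW
  exact (hx n).mono fun y hy g ↦ hnW (hy g)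

end Flow

/-- a flow on a metric space that is pointwise regularly almost periodic
with respect to the discrete topology on `G`, where `G` has only countably many
finite-index normal subgroups, is equicontinuous at a residual set of points. -/
theorem statement7 {G X : Type} [Group G] [TopologicalSpace G] [T2Space G]
    [ContinuousMul G] [MetricSpace X] [LocallyCompactSpace X]
    [MulAction G X] [ContinuousSMul G X]
    (hLag : ∀ x : X, IsCompact (closure (MulAction.orbit G x)))
    (hrap : ∀ x : X, ∀ U ∈ 𝓝 x, ∃ H : Subgroup G, H.Normal ∧ H.FiniteIndex ∧
      ∀ h ∈ H, h • x ∈ U)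
    (hcount : {H : Subgroup G | H.Normal ∧ H.FiniteIndex}.Countable) :
    {x : X | ∀ ε ∈ 𝓤 X, ∃ U ∈ 𝓝 x, ∀ y ∈ U, ∀ g : G, (g • y, g • x) ∈ ε} ∈
      residual X := by
  filter_upwards [statement7_general hLag hrap hcount] with x hx ε hε
  exact ⟨_, hx _ (symm_le_uniformity hε), fun _ hy ↦ hy⟩
end

section
/- Let X be a compact Hausdorff 0-dimensional space and f : X → X a homeomorphism. Then the following are pairwise equivalent: (i) f is weakly rigid: for every entourage ε of X and every finite set of points x_1, …, x_m ∈ X there exists n ∈ ℤ, n ≠ 0, with (fⁿx_j, x_j) ∈ ε for all j; (ii) f is rigid: there is a net n_k in ℤ with n_k → +∞ such that f^{n_k}x → x for every x ∈ X; (iii) f is uniformly rigid: there is a net n_k → +∞ such that f^{n_k} → id uniformly on X; (iv) the ℤ-flow generated by f is equicontinuous: for every x ∈ X and every entourage ε there is a neighborhood U of x with (fⁿy, fⁿx) ∈ ε for all y ∈ U and all n ∈ ℤ; (v) f is positively pointwise product recurrent: for every pair (x₁, x₂) ∈ X × X there is a net n_k → +∞ with (f^{n_k}x₁, f^{n_k}x₂)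 → (x₁, x₂); (vi) the ℤ-flow is regularly almost periodic: for every entourage ε there is an integer m ≥ 1 with (f^{mk}x, x) ∈ ε for all k ∈ ℤ and all x ∈ X. -/
open Filter Topology Uniformity

/-- The `n`-th iterate (`n : ℤ`) of a homeomorphism. -/
noncomputable def hpow {X : Type} [TopologicalSpace X] (f : X ≃ₜ X) (n : ℤ) : X → X :=
  (f.toEquiv ^ n : Equiv.Perm X)

/-!
In a compact zero-dimensional space every entourage contains the graph of a clopen equivalence
relation `S`, so regular almost periodicity means that some positive power of `f` preserves every
class of `S`, for each such `S`. An `f`-invariant clopen relation has this property, because `f`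
permutes its finitely many classes. It therefore suffices to refine `S` to an invariant clopen
relation.

* If the flow is equicontinuous, having the same `S`-itinerary over all of `ℤ` is such a
  relation.
* If `S`-agreement of two orbits at all positive times forces `S`-agreement at time `0`, then by
  compactness the times `1, …, N` suffice for some `N`. Having the same `S`-itinerary over
  `1, …, N` is then a clopen relation invariant under `f⁻¹`.

Product recurrence of a pair rules out orbits that agree at all positive times but not at time `0`.
Weak rigidity may return only along negative times, so it is applied to a bad pair for `f` and a
bad pair for `f⁻¹` simultaneously: whichever sign the return time has, it contradicts one of them.
-/

theorem exists_iterate_rel_of_finite_quotient {X : Type*} {g : X → X}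
    (hg : Function.Surjective g) {r : Setoid X} [Finite (Quotient r)]
    (hr : ∀ x y, r x y → r (g x) (g y)) : ∃ m : ℕ, 0 < m ∧ ∀ x, r (g^[m] x) x := by
  let φ : Quotient r → Quotient r := Quotient.map g hr
  have hφ : Function.Semiconj (Quotient.mk r) g φ := fun _ => rfl
  have hφ_surj : Function.Surjective φ :=
    .of_comp (g := Quotient.mk r) (Quotient.mk_surjective.comp hg)
  let σ : Equiv.Perm (Quotient r) := .ofBijective φ (Finite.surjective_iff_bijective.1 hφ_surj)
  refine ⟨orderOf σ, orderOf_pos σ, fun x => Quotient.exact ?_⟩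
  calc Quotient.mk r (g^[orderOf σ] x) = σ^[orderOf σ] (Quotient.mk r x) :=
        hφ.iterate_right _ x
    _ = Quotient.mk r x := by rw [Equiv.Perm.iterate_eq_pow, pow_orderOf_eq_one]; rfl

section DiscreteQuotients

variable {X : Type*}

theorem isClopen_setOf_discreteQuotient_rel [TopologicalSpace X] (S : DiscreteQuotient X) :
    IsClopen {p : X × X | S.toSetoid p.1 p.2} := by
  have h_eq : {p : X × X | S.toSetoid p.1 p.2} =
      Prod.map S.proj S.proj ⁻¹' Set.diagonal S := by
    ext p
    exact Quotient.eq''.symm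
  rw [h_eq]
  exact (isClopen_discrete _).preimage (S.proj_continuous.prodMap S.proj_continuous)

theorem setOf_discreteQuotient_rel_mem_uniformity [UniformSpace X] [CompactSpace X]
    (S : DiscreteQuotient X) : {p : X × X | S.toSetoid p.1 p.2} ∈ 𝓤 X := by
  rw [← nhdsSet_diagonal_eq_uniformity,
    (isClopen_setOf_discreteQuotient_rel S).isOpen.mem_nhdsSet, Set.diagonal_subset_iff]
  exact S.refl

theorem inseparable_of_forall_discreteQuotient_rel [TopologicalSpace X]
    (hX : TopologicalSpace.IsTopologicalBasis {s : Set X | IsClopen s}) {x y : X}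
    (hxy : ∀ S : DiscreteQuotient X, S.toSetoid x y) : Inseparable x y := by
  have h_iff {V : Set X} (hV : IsClopen V) : x ∈ V ↔ y ∈ V := hxy (.ofIsClopen hV)
  refine hX.nhds_hasBasis.eq_of_same_basis (hX.nhds_hasBasis.congr ?_ fun _ _ => rfl)
  exact fun V => and_congr_right fun hV => (h_iff hV).symm

theorem exists_discreteQuotient_rel_subset [UniformSpace X] [CompactSpace X]
    (hX : TopologicalSpace.IsTopologicalBasis {s : Set X | IsClopen s})
    {ε : Set (X × X)} (hε : ε ∈ 𝓤 X) :
    ∃ S : DiscreteQuotient X, {p : X × X | S.toSetoid p.1 p.2} ⊆ ε := by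
  refine exists_subset_nhds_of_compactSpace
    (fun S T => ⟨S ⊓ T, fun _ hp => hp.1, fun _ hp => hp.2⟩)
    (fun S => (isClopen_setOf_discreteQuotient_rel S).isClosed) ?_
  rintro ⟨x, y⟩ hxy
  have h_insep : Inseparable x y :=
    inseparable_of_forall_discreteQuotient_rel hX fun S => Set.mem_iInter.1 hxy S
  rw [← ((Inseparable.refl x).prod h_insep).nhds_eq]
  exact nhds_le_uniformity x hε

end DiscreteQuotients

section Periodicity

variable {X : Type*} [TopologicalSpace X] {f : X ≃ₜ X}

/-- Some positive power of `f` moves every point within its class of `r`. -/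
def IsPeriodicMod (f : X ≃ₜ X) (r : Setoid X) : Prop :=
  ∃ m : ℕ, 0 < m ∧ ∀ x, r ((f ^ m) x) x

theorem IsPeriodicMod.mono {r s : Setoid X} (h : IsPeriodicMod f r) (hrs : r ≤ s) :
    IsPeriodicMod f s :=
  let ⟨m, hm, hr⟩ := h
  ⟨m, hm, fun x => hrs (hr x)⟩

theorem IsPeriodicMod.of_inv {r : Setoid X} (h : IsPeriodicMod f⁻¹ r) : IsPeriodicMod f r := by
  obtain ⟨m, hm, hr⟩ := h
  refine ⟨m, hm, fun x => r.symm ?_⟩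
  simpa only [← Homeomorph.mul_apply, ← mul_pow, inv_mul_cancel, one_pow, inv_pow,
    Homeomorph.one_apply] using hr ((f ^ m) x)

theorem IsPeriodicMod.exists_zpow_rel {r : Setoid X} (h : IsPeriodicMod f r) :
    ∃ m : ℤ, 1 ≤ m ∧ ∀ (k : ℤ) (x : X), r ((f ^ (m * k)) x) x := by
  obtain ⟨m, hm, hr⟩ := h
  have h_add (k : ℤ) (x : X) : r ((f ^ (m * (k + 1))) x) ((f ^ (m * k)) x) := by
    rw [mul_add_one, add_comm, zpow_add, zpow_natCast, Homeomorph.mul_apply]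
    exact hr _
  refine ⟨m, by exact_mod_cast hm, fun k x => ?_⟩
  induction k using Int.induction_on with
  | zero => rw [mul_zero, zpow_zero]; exact r.refl x
  | succ k ih => exact r.trans (h_add k x) ih
  | pred k ih => exact r.trans (r.symm (by simpa using h_add (-k - 1) x)) ih

theorem isPeriodicMod_of_invariant [CompactSpace X] {S : DiscreteQuotient X}
    (hS : ∀ x y, S.toSetoid x y → S.toSetoid (f x) (f y)) : IsPeriodicMod f S.toSetoid := by
  obtain ⟨m, hm, hr⟩ := exists_iterate_rel_of_finite_quotient f.surjective hS
  have h_pow : ⇑(f ^ m) = f^[m] := hom_coe_pow _ rfl (fun _ _ => rfl) f m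
  exact ⟨m, hm, fun x => h_pow ▸ hr x⟩

/-- Orbits that agree modulo `r` at all positive times also agree modulo `r` at time `0`. -/
def FutureDetermines (f : X ≃ₜ X) (r : Setoid X) : Prop :=
  ∀ x y, (∀ n : ℤ, 0 < n → r ((f ^ n) x) ((f ^ n) y)) → r x y

theorem FutureDetermines.exists_finite_window [CompactSpace X] {S : DiscreteQuotient X}
    (h : FutureDetermines f S.toSetoid) :
    ∃ N : ℕ, ∀ x y, (∀ n ∈ Set.Icc (1 : ℤ) N, S.toSetoid ((f ^ n) x) ((f ^ n) y)) →
      S.toSetoid x y := by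
  have hS := isClopen_setOf_discreteQuotient_rel S
  let V (N : ℕ) : Set (X × X) :=
    {p | ∀ n ∈ Set.Icc (1 : ℤ) N, S.toSetoid ((f ^ n) p.1) ((f ^ n) p.2)}
  have hV_anti : Antitone V := fun M N hMN p hp n hn =>
    hp n ⟨hn.1, hn.2.trans (by exact_mod_cast hMN)⟩
  have hV_closed (N : ℕ) : IsClosed (V N) := by
    simp only [V, Set.ofPred_forall]
    exact isClosed_biInter fun n _ =>
      hS.isClosed.preimage ((f ^ n).continuous.prodMap (f ^ n).continuous)
  obtain ⟨N, hN⟩ := exists_subset_nhds_of_compactSpace hV_anti.directed_ge hV_closed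
    (U := {p | S.toSetoid p.1 p.2}) fun p hp => hS.isOpen.mem_nhds <| h _ _ fun n hn =>
      Set.mem_iInter.1 hp n.toNat n ⟨hn, n.self_le_toNat⟩
  exact ⟨N, fun x y hxy => hN (a := (x, y)) hxy⟩

end Periodicity

section Itineraries

variable {X : Type*} [UniformSpace X] [CompactSpace X] {f : X ≃ₜ X} {S : DiscreteQuotient X}

/-- The discrete quotient identifying two points when their `f`-orbits visit the same classes of
`S` at all times in `A`. Equicontinuity of the iterates over `A` makes the classes open. -/
def itineraryQuotient (S : DiscreteQuotient X) (f : X ≃ₜ X) (A : Set ℤ)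
    (hA : Equicontinuous fun n : A => ⇑(f ^ (n : ℤ))) : DiscreteQuotient X where
  r x y := ∀ n ∈ A, S.toSetoid ((f ^ n) x) ((f ^ n) y)
  iseqv := ⟨fun _ _ _ => S.refl _, fun h n hn => S.symm _ _ (h n hn),
    fun h h' n hn => S.trans _ _ _ (h n hn) (h' n hn)⟩
  isOpen_setOfPred_rel x := by
    refine isOpen_iff_mem_nhds.2 fun y hxy => ?_
    filter_upwards [hA y _ (setOf_discreteQuotient_rel_mem_uniformity S)] with z hyz
    exact fun n hn => S.trans _ _ _ (hxy n hn) (hyz ⟨n, hn⟩)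

theorem isPeriodicMod_of_equicontinuous (hf : Equicontinuous fun n : ℤ => ⇑(f ^ n))
    (S : DiscreteQuotient X) : IsPeriodicMod f S.toSetoid := by
  let T := itineraryQuotient S f Set.univ (hf.comp _)
  have hT_inv (x y : X) (hxy : T.toSetoid x y) : T.toSetoid (f x) (f y) := by
    intro n _
    simpa only [zpow_add_one, Homeomorph.mul_apply] using hxy (n + 1) trivial
  have hTS : T.toSetoid ≤ S.toSetoid := fun {_ _} hxy => hxy 0 trivial
  exact (isPeriodicMod_of_invariant hT_inv).mono hTS

theorem FutureDetermines.isPeriodicMod (h : FutureDetermines f S.toSetoid) :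
    IsPeriodicMod f S.toSetoid := by
  obtain ⟨N, hN⟩ := h.exists_finite_window
  let T := itineraryQuotient S f (Set.Icc 1 N)
    (equicontinuous_finite.2 fun n => (f ^ (n : ℤ)).continuous)
  have hTS : T.toSetoid ≤ S.toSetoid := fun {x y} hxy => hN x y hxy
  have hT_inv (x y : X) (hxy : T.toSetoid x y) : T.toSetoid (f⁻¹ x) (f⁻¹ y) := by
    intro n hn
    simp only [← Homeomorph.mul_apply, ← zpow_sub_one]
    obtain rfl | hn_one := eq_or_ne n 1
    · simpa using hTS hxy
    · exact hxy (n - 1) ⟨by grind, by grind⟩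
  exact ((isPeriodicMod_of_invariant hT_inv).mono hTS).of_inv

end Itineraries

section PointwiseRecurrence

variable {X : Type*} [TopologicalSpace X] {f : X ≃ₜ X}

/-- Rigidity: the iterates converge pointwise to the identity along some net of times tending to
`+∞`. The net is encoded by a nontrivial filter finer than `atTop`. -/
def IsRigid (f : X ≃ₜ X) : Prop :=
  ∃ l : Filter ℤ, l.NeBot ∧ l ≤ atTop ∧ ∀ x : X, Tendsto (fun n : ℤ => (f ^ n) x) l (𝓝 x)

/-- Positive pointwise product recurrence: every pair of points is recurrent in positive time
under `f × f`. -/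
def IsPositivelyProductRecurrent (f : X ≃ₜ X) : Prop :=
  ∀ x₁ x₂ : X, MapClusterPt (x₁, x₂) atTop fun n : ℤ => ((f ^ n) x₁, (f ^ n) x₂)

theorem IsRigid.isPositivelyProductRecurrent (h : IsRigid f) : IsPositivelyProductRecurrent f :=
  let ⟨_, _, hl_top, hf⟩ := h
  fun x y => ((hf x).prodMk_nhds (hf y)).mapClusterPt.mono hl_top

theorem IsPositivelyProductRecurrent.futureDetermines (h : IsPositivelyProductRecurrent f)
    (S : DiscreteQuotient X) : FutureDetermines f S.toSetoid := by
  intro x y hxy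
  have h_nhds : {p : X × X | S.toSetoid x p.1 ∧ S.toSetoid y p.2} ∈ 𝓝 (x, y) :=
    prod_mem_nhds ((S.isOpen_setOfPred_rel x).mem_nhds (S.refl x))
      ((S.isOpen_setOfPred_rel y).mem_nhds (S.refl y))
  obtain ⟨n, ⟨hx, hy⟩, hn⟩ := ((mapClusterPt_iff_frequently.1 (h x y) _ h_nhds).and_eventually
    (eventually_gt_atTop 0)).exists
  exact S.trans _ _ _ hx (S.trans _ _ _ (hxy n hn) (S.symm _ _ hy))

end PointwiseRecurrence

section UniformRecurrence

variable {X : Type*} [UniformSpace X] {f : X ≃ₜ X}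

/-- Weak rigidity: every finite set of points returns simultaneously at some nonzero time. -/
def IsWeaklyRigid (f : X ≃ₜ X) : Prop :=
  ∀ ε ∈ 𝓤 X, ∀ (m : ℕ) (xs : Fin m → X),
    ∃ n : ℤ, n ≠ 0 ∧ ∀ j : Fin m, ((f ^ n) (xs j), xs j) ∈ ε

/-- Uniform rigidity: as `IsRigid`, with uniform convergence. -/
def IsUniformlyRigid (f : X ≃ₜ X) : Prop :=
  ∃ l : Filter ℤ, l.NeBot ∧ l ≤ atTop ∧ TendstoUniformly (fun n : ℤ => ⇑(f ^ n)) id l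

/-- Regular almost periodicity of the generated flow: for each entourage, the points are uniformly
close to their images at all times in a nontrivial subgroup of `ℤ`. -/
def IsRegularlyAlmostPeriodic (f : X ≃ₜ X) : Prop :=
  ∀ ε ∈ 𝓤 X, ∃ m : ℤ, 1 ≤ m ∧ ∀ (k : ℤ) (x : X), ((f ^ (m * k)) x, x) ∈ ε

theorem IsUniformlyRigid.isRigid (h : IsUniformlyRigid f) : IsRigid f :=
  let ⟨l, hl, hl_top, hf⟩ := h
  ⟨l, hl, hl_top, hf.tendsto_at⟩

theorem IsRigid.isWeaklyRigid (h : IsRigid f) : IsWeaklyRigid f := by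
  obtain ⟨l, hl, hl_top, hf⟩ := h
  intro ε hε m xs
  have h_close : ∀ᶠ n in l, ∀ j, ((f ^ n) (xs j), xs j) ∈ ε :=
    eventually_all.2 fun j => (hf (xs j)).eventually (mem_nhds_right (xs j) hε)
  obtain ⟨n, hn, hn_pos⟩ := (h_close.and (hl_top (eventually_gt_atTop 0))).exists
  exact ⟨n, ne_of_gt hn_pos, hn⟩

theorem IsRegularlyAlmostPeriodic.isUniformlyRigid (h : IsRegularlyAlmostPeriodic f) :
    IsUniformlyRigid f := by
  have h_cluster : MapClusterPt (UniformFun.ofFun (id : X → X)) atTop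
      fun n : ℤ => UniformFun.ofFun ⇑(f ^ n) := by
    refine mapClusterPt_iff_frequently.2 fun s hs => frequently_atTop.2 fun N => ?_
    obtain ⟨ε, hε, hεs⟩ := (UniformFun.hasBasis_nhds X X _).mem_iff.1 hs
    obtain ⟨m, hm, h_close⟩ := h _ (symm_le_uniformity hε)
    exact ⟨m * |N|, by nlinarith [le_abs_self N, abs_nonneg N], hεs (h_close |N|)⟩
  obtain ⟨l, hl_top, hl⟩ := mapClusterPt_iff_ultrafilter.1 h_cluster
  exact ⟨l, inferInstance, hl_top, UniformFun.tendsto_iff_tendstoUniformly.1 hl⟩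

theorem IsRegularlyAlmostPeriodic.equicontinuous (h : IsRegularlyAlmostPeriodic f) :
    Equicontinuous fun n : ℤ => ⇑(f ^ n) := by
  intro x ε hε
  obtain ⟨δ, hδ, hδ_symm, hδε⟩ := comp_comp_symm_mem_uniformity_sets hε
  obtain ⟨m, hm, h_close⟩ := h δ hδ
  have h_residues : Equicontinuous fun r : Set.Ico 0 m => ⇑(f ^ (r : ℤ)) :=
    equicontinuous_finite.2 fun r => (f ^ (r : ℤ)).continuous
  filter_upwards [h_residues x δ hδ] with y hy n
  have h_mod : n % m ∈ Set.Ico 0 m :=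
    ⟨Int.emod_nonneg n (by positivity), Int.emod_lt_of_pos n (by positivity)⟩
  rw [← Int.mul_ediv_add_emod n m, zpow_add, Homeomorph.mul_apply, Homeomorph.mul_apply]
  exact hδε ⟨_, ⟨_, h_close (n / m) _, hy ⟨n % m, h_mod⟩⟩, hδ_symm.symm _ _ (h_close (n / m) _)⟩

variable [CompactSpace X]

theorem IsWeaklyRigid.futureDetermines_or_inv (h : IsWeaklyRigid f) (S : DiscreteQuotient X) :
    FutureDetermines f S.toSetoid ∨ FutureDetermines f⁻¹ S.toSetoid := by
  by_contra! h_not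
  simp only [FutureDetermines, not_forall] at h_not
  obtain ⟨⟨x, y, hxy, hxy_zero⟩, ⟨z, w, hzw, hzw_zero⟩⟩ := h_not
  obtain ⟨n, hn, h_ret⟩ := h _ (setOf_discreteQuotient_rel_mem_uniformity S) 4 ![x, y, z, w]
  have h_return {a b : X} (ha : S.toSetoid ((f ^ n) a) a) (hb : S.toSetoid ((f ^ n) b) b)
      (hab : S.toSetoid ((f ^ n) a) ((f ^ n) b)) : S.toSetoid a b :=
    S.trans _ _ _ (S.symm _ _ ha) (S.trans _ _ _ hab hb)
  rcases hn.lt_or_gt with hn_neg | hn_pos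
  · refine hzw_zero (h_return (h_ret 2) (h_ret 3) ?_)
    simpa using hzw (-n) (neg_pos.2 hn_neg)
  · exact hxy_zero (h_return (h_ret 0) (h_ret 1) (hxy n hn_pos))

theorem isRegularlyAlmostPeriodic_of_forall_isPeriodicMod
    (hX : TopologicalSpace.IsTopologicalBasis {s : Set X | IsClopen s})
    (h : ∀ S : DiscreteQuotient X, IsPeriodicMod f S.toSetoid) : IsRegularlyAlmostPeriodic f := by
  intro ε hε
  obtain ⟨S, hSε⟩ := exists_discreteQuotient_rel_subset hX hε
  obtain ⟨m, hm, h_rel⟩ := (h S).exists_zpow_rel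
  exact ⟨m, hm, fun k x => hSε (h_rel k x)⟩

end UniformRecurrence

theorem statement8_general {X : Type*} [UniformSpace X] [CompactSpace X]
    (hX : TopologicalSpace.IsTopologicalBasis {s : Set X | IsClopen s}) (f : X ≃ₜ X) :
    List.TFAE [IsWeaklyRigid f, IsRigid f, IsUniformlyRigid f,
      Equicontinuous fun n : ℤ => ⇑(f ^ n),
      IsPositivelyProductRecurrent f, IsRegularlyAlmostPeriodic f] := by
  have h_periodic := isRegularlyAlmostPeriodic_of_forall_isPeriodicMod (f := f) hX
  tfae_have 3 → 2 := IsUniformlyRigid.isRigid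
  tfae_have 2 → 1 := IsRigid.isWeaklyRigid
  tfae_have 2 → 5 := IsRigid.isPositivelyProductRecurrent
  tfae_have 6 → 3 := IsRegularlyAlmostPeriodic.isUniformlyRigid
  tfae_have 6 → 4 := IsRegularlyAlmostPeriodic.equicontinuous
  tfae_have 4 → 6 := fun h => h_periodic fun S => isPeriodicMod_of_equicontinuous h S
  tfae_have 5 → 6 := fun h => h_periodic fun S => (h.futureDetermines S).isPeriodicMod
  tfae_have 1 → 6 := fun h => h_periodic fun S =>
    (h.futureDetermines_or_inv S).elim (·.isPeriodicMod) (·.isPeriodicMod.of_inv)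
  tfae_finish

theorem equicontinuous_iff_exists_nhds {ι X α : Type*} [TopologicalSpace X] [UniformSpace α]
    {F : ι → X → α} : Equicontinuous F ↔
      ∀ x, ∀ ε ∈ 𝓤 α, ∃ U ∈ 𝓝 x, ∀ y ∈ U, ∀ i, (F i y, F i x) ∈ ε := by
  refine forall_congr' fun x => ⟨fun h ε hε => ?_, fun h ε hε => ?_⟩
  · exact ⟨_, h _ (symm_le_uniformity hε), fun _ hy => hy⟩
  · obtain ⟨U, hU, h_close⟩ := h _ (symm_le_uniformity hε)
    exact mem_of_superset hU h_close

theorem hpow_eq_zpow {X : Type} [TopologicalSpace X] (f : X ≃ₜ X) (n : ℤ) :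
    hpow f n = ⇑(f ^ n) := by
  let toPerm : (X ≃ₜ X) →* Equiv.Perm X :=
    { toFun := Homeomorph.toEquiv, map_one' := rfl, map_mul' := fun _ _ => rfl }
  exact congrArg DFunLike.coe (map_zpow toPerm f n).symm

/-- for a homeomorphism `f` of a compact Hausdorff 0-dimensional space,
weak rigidity, rigidity, uniform rigidity, equicontinuity, positive pointwise product
recurrence, and regular almost periodicity of the generated ℤ-flow are all
equivalent. -/
theorem statement8 {X : Type} [UniformSpace X] [CompactSpace X] [T2Space X]
    (h0dim : ∀ x : X, ∀ U ∈ 𝓝 x, ∃ V : Set X, IsClopen V ∧ x ∈ V ∧ V ⊆ U)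
    (f : X ≃ₜ X) :
    List.TFAE
      [ (∀ ε ∈ 𝓤 X, ∀ (m : ℕ) (xs : Fin m → X),
          ∃ n : ℤ, n ≠ 0 ∧ ∀ j : Fin m, (hpow f n (xs j), xs j) ∈ ε),
        (∃ l : Filter ℤ, l.NeBot ∧ l ≤ atTop ∧
          ∀ x : X, Tendsto (fun n : ℤ => hpow f n x) l (𝓝 x)),
        (∃ l : Filter ℤ, l.NeBot ∧ l ≤ atTop ∧
          TendstoUniformly (fun (n : ℤ) (x : X) => hpow f n x) id l),
        (∀ x : X, ∀ ε ∈ 𝓤 X, ∃ U ∈ 𝓝 x, ∀ y ∈ U, ∀ n : ℤ,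
          (hpow f n y, hpow f n x) ∈ ε),
        (∀ x₁ x₂ : X,
          MapClusterPt (x₁, x₂) atTop fun n : ℤ => (hpow f n x₁, hpow f n x₂)),
        (∀ ε ∈ 𝓤 X, ∃ m : ℤ, 1 ≤ m ∧ ∀ (k : ℤ) (x : X), (hpow f (m * k) x, x) ∈ ε) ]
    := by
  simp only [hpow_eq_zpow, ← equicontinuous_iff_exists_nhds]
  exact statement8_general (TopologicalSpace.isTopologicalBasis_of_isOpen_of_nhds
    (fun _ hV => hV.isOpen) fun x U hxU hU => h0dim x U (hU.mem_nhds hxU)) f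
end

section
/- Let X be a locally compact Hausdorff uniform space and f : X → X a homeomorphism such that the closure of {fⁿx | n ∈ ℤ} is compact for every x ∈ X. Let x ∈ X and let κ ≥ 1 be an integer. If x is a cluster point of the sequence (fⁿx) as n → +∞ (i.e. there is a net i_n in ℕ with i_n → +∞ and f^{i_n}x → x), then x is a cluster point of the sequence (f^{κn}x) as n → +∞, i.e. there is a net k_n ∈ κℕ with k_n → +∞ and f^{k_n}x → x. -/
/-!
Call a residue `r` modulo `κ` a return residue if `x` is a cluster point of the `fⁿ x` with `n ≡ r`
as `n → +∞`. Since there are finitely many residues and `x` is recurrent, some `r` is a return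
residue. By continuity of the iterates of `f`, a return at time `m` can be followed by a much closer
return at time `n` to make a return at time `m + n`, so return residues are closed under addition.
Hence `κ r = 0` is a return residue.
-/

open Filter Topology

open scoped Pointwise

theorem exists_mapClusterPt_inf_fiber {α X G : Type*} [TopologicalSpace X] [Finite G]
    {l : Filter α} {u : α → X} {x : X} (φ : α → G) (h : MapClusterPt x l u) :
    ∃ g, MapClusterPt x (l ⊓ 𝓟 (φ ⁻¹' {g})) u := by
  obtain ⟨U, hUl, hUx⟩ := mapClusterPt_iff_ultrafilter.mp h
  obtain ⟨g, hg⟩ := (U.map φ).eq_pure_of_finite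
  have fiber_mem : φ ⁻¹' {g} ∈ U := by
    rw [← Ultrafilter.mem_map, hg]
    exact Ultrafilter.mem_pure.mpr rfl
  exact ⟨g, mapClusterPt_iff_ultrafilter.mpr ⟨U, le_inf hUl (le_principal_iff.mpr fiber_mem), hUx⟩⟩

section FiberFilter

variable {M G F : Type*} [FunLike F M G]

theorem inf_fiber_add_inf_fiber_le [Add M] [Add G] [AddHomClass F M G] {l : Filter M}
    (hl : l + l ≤ l) (φ : F) (a b : G) :
    (l ⊓ 𝓟 (φ ⁻¹' {a})) + (l ⊓ 𝓟 (φ ⁻¹' {b})) ≤ l ⊓ 𝓟 (φ ⁻¹' {a + b}) := by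
  refine le_inf ((add_le_add inf_le_left inf_le_left).trans hl) (le_principal_iff.mpr ?_)
  refine mem_of_superset (add_mem_add (mem_inf_of_right (mem_principal_self _))
    (mem_inf_of_right (mem_principal_self _))) ?_
  rintro _ ⟨m, rfl, n, rfl, rfl⟩
  exact map_add φ m n

variable [AddSemigroup M] {X : Type*} [TopologicalSpace X] [AddSemigroupAction M X]
  [ContinuousConstVAdd M X]

theorem mapClusterPt_vadd_trans {k l : Filter M} {x y z : X}
    (hxy : MapClusterPt y l (· +ᵥ x)) (hyz : MapClusterPt z k (· +ᵥ y)) :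
    MapClusterPt z (k + l) (· +ᵥ x) := by
  refine (nhds_basis_opens z).mapClusterPt_iff_frequently.mpr fun U ⟨hzU, hU⟩ ↦ ?_
  refine frequently_iff.mpr fun {S} hS ↦ ?_
  obtain ⟨A, hA, B, hB, hABS⟩ := mem_add.mp hS
  obtain ⟨m, hmA, hmU⟩ := frequently_iff.mp (hyz.frequently (hU.mem_nhds hzU)) hA
  have preimage_mem : (m +ᵥ ·) ⁻¹' U ∈ 𝓝 y :=
    (hU.preimage (continuous_const_vadd m)).mem_nhds hmU
  obtain ⟨n, hnB, hnU⟩ := frequently_iff.mp (hxy.frequently preimage_mem) hB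
  exact ⟨m + n, hABS (Set.add_mem_add hmA hnB), by rwa [add_vadd]⟩

theorem mapClusterPt_vadd_inf_fiber_nsmul [AddMonoid G] [AddHomClass F M G] {l : Filter M}
    (hl : l + l ≤ l) (φ : F) {g : G} {x : X}
    (h : MapClusterPt x (l ⊓ 𝓟 (φ ⁻¹' {g})) (· +ᵥ x)) {n : ℕ} (hn : 1 ≤ n) :
    MapClusterPt x (l ⊓ 𝓟 (φ ⁻¹' {n • g})) (· +ᵥ x) := by
  induction n, hn using Nat.le_induction with
  | base => rwa [one_nsmul]
  | succ n _ ih =>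
    rw [succ_nsmul]
    exact (mapClusterPt_vadd_trans h ih).mono (inf_fiber_add_inf_fiber_le hl φ _ _)

theorem mapClusterPt_vadd_inf_fiber_zero [AddGroup G] [Finite G] [AddHomClass F M G]
    {l : Filter M} (hl : l + l ≤ l) (φ : F) {x : X} (h : MapClusterPt x l (· +ᵥ x)) :
    MapClusterPt x (l ⊓ 𝓟 (φ ⁻¹' {0})) (· +ᵥ x) := by
  obtain ⟨g, hg⟩ := exists_mapClusterPt_inf_fiber φ h
  rw [← addOrderOf_nsmul_eq_zero g]
  exact mapClusterPt_vadd_inf_fiber_nsmul hl φ hg (addOrderOf_pos g)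

end FiberFilter

theorem atTop_add_atTop_le {M : Type*} [Add M] [Preorder M] [CanonicallyOrderedAdd M] :
    (atTop : Filter M) + atTop ≤ atTop := by
  refine le_iInf fun a ↦ le_principal_iff.mpr ?_
  refine mem_of_superset (add_mem_add (Ici_mem_atTop a) univ_mem) ?_
  rintro _ ⟨m, hm, n, -, rfl⟩
  exact hm.trans le_self_add

theorem atTop_inf_fiber_natCast_zmod_zero {κ : ℕ} (hκ : κ ≠ 0) :
    atTop ⊓ 𝓟 (Nat.castAddMonoidHom (ZMod κ) ⁻¹' {0}) = map (κ * ·) atTop := by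
  have fiber_eq_range : Nat.castAddMonoidHom (ZMod κ) ⁻¹' {0} = Set.range (κ * ·) := by
    ext n
    simp only [Set.mem_preimage, Set.mem_singleton_iff, Nat.coe_castAddMonoidHom,
      ZMod.natCast_eq_zero_iff, Set.mem_range, dvd_def, eq_comm]
  have comap_atTop : comap (κ * ·) atTop = (atTop : Filter ℕ) :=
    comap_embedding_atTop (fun _ _ ↦ Nat.mul_le_mul_left_iff (Nat.pos_of_ne_zero hκ))
      fun n ↦ ⟨n, Nat.le_mul_of_pos_left n (Nat.pos_of_ne_zero hκ)⟩
  rw [fiber_eq_range, ← map_comap, comap_atTop]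

theorem statement10_general {X : Type*} [TopologicalSpace X] {f : X → X} (hf : Continuous f)
    {x : X} {κ : ℕ} (hκ : κ ≠ 0) (hrec : MapClusterPt x atTop fun n ↦ f^[n] x) :
    MapClusterPt x atTop fun n ↦ f^[κ * n] x := by
  let _ : AddAction ℕ X :=
    { vadd n := f^[n], zero_vadd _ := rfl, add_vadd := Function.iterate_add_apply f }
  have : ContinuousConstVAdd ℕ X := ⟨hf.iterate⟩
  have : NeZero κ := ⟨hκ⟩
  have recurrent_mod : MapClusterPt x (atTop ⊓ 𝓟 (Nat.castAddMonoidHom (ZMod κ) ⁻¹' {0}))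
      fun n ↦ f^[n] x :=
    mapClusterPt_vadd_inf_fiber_zero atTop_add_atTop_le _ hrec
  rwa [atTop_inf_fiber_natCast_zmod_zero hκ, ← mapClusterPt_comp] at recurrent_mod

theorem hpow_natCast {X : Type} [TopologicalSpace X] (f : X ≃ₜ X) (n : ℕ) :
    hpow f n = f^[n] := by
  rw [hpow, zpow_natCast, ← Equiv.Perm.iterate_eq_pow]
  rfl

/-- for a homeomorphism of a locally compact Hausdorff uniform space
with compact orbit closures, if `x` is a cluster point of `(fⁿ x)` as `n → +∞`, then
for every `κ ≥ 1`, `x` is a cluster point of `(f^{κ n} x)` as `n → +∞`. -/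
theorem statement10 {X : Type} [UniformSpace X] [T2Space X] [LocallyCompactSpace X]
    (f : X ≃ₜ X)
    (hLag : ∀ x : X, IsCompact (closure (Set.range fun n : ℤ => hpow f n x)))
    (x : X) (κ : ℕ) (hκ : 1 ≤ κ)
    (hrec : MapClusterPt x atTop fun n : ℕ => hpow f (n : ℤ) x) :
    MapClusterPt x atTop fun n : ℕ => hpow f ((κ * n : ℕ) : ℤ) x := by
  simp only [hpow_natCast] at hrec ⊢
  exact statement10_general f.continuous (Nat.one_le_iff_ne_zero.mp hκ) hrec
end
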